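/- Let d ≥ 2 and let Ω, ρ be as in the context. There exists M = M(d) ≥ 1 and a constant C such that for every family {χ_j}_{j≥0} ⊂ 𝒴_M, every finite collection 𝔔 ⊆ 𝔇_{≥0} and every family F = {F_Q}_{Q∈𝔔} of L¹(ℝ^d) functions the following hold, with m_j(ξ) := χ_j(2^j(1−ρ(ξ))) and 𝔔_j := 𝔔 ∩ 𝔇_j: (i) for every integer s ≥ 0, ‖Σ_{j≥2s} 2^{j(d+1)/2} m_j(D)[Σ_{Q∈𝔔_{j−s}} F_Q 1_Q]‖_{L²} ≤ C · 2^{s(d+1)/2} · μ(𝔔)^{1/2} · sup_{Q∈𝔔}‖F_Q‖_{L¹}; (ii) for all integers j ≥ 0 and L with 0 < L ≤ j/2, ‖2^{j(d+1)/2} m_j(D)[Σ_{Q∈𝔔_L} F_Q 1_Q]‖_{L²} ≤ C · 2^{j(3d+1)/4 − Ld} · μ(𝔔)^{1/2} · sup_{Q∈𝔔}‖F_Q‖_{L¹}. -/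

import Mathlib

open MeasureTheory Filter
open scoped ENNReal NNReal RealInnerProductSpace BigOperators Topology

noncomputable section

/-- `ℝ^d` as a Euclidean space. -/
abbrev Euc (d : ℕ) : Type := EuclideanSpace ℝ (Fin d)

/-- The geometric setup: `Ω` is a bounded open convex subset of `ℝ^d` containing the origin,
`ρ` is its Minkowski functional, which is assumed to be smooth away from the origin and
positive away from the origin. -/
structure IsMinkowskiGauge (d : ℕ) (Ω : Set (Euc d)) (ρ : Euc d → ℝ) : Prop where
  isOpen : IsOpen Ω
  convex : Convex ℝ Ω
  isBounded : Bornology.IsBounded Ω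
  zero_mem : (0 : Euc d) ∈ Ω
  eq_gauge : ρ = gauge Ω
  smooth : ContDiffOn ℝ (⊤ : ℕ∞) ρ {(0 : Euc d)}ᶜ
  pos : ∀ ξ : Euc d, ξ ≠ 0 → 0 < ρ ξ

/-- Everywhere nonvanishing Gaussian curvature of `∂Ω = {ρ = 1}`: for every `ξ ≠ 0`
the Hessian of `ρ` at `ξ` has rank `d - 1`. -/
def HasNonvanishingCurvature (d : ℕ) (ρ : Euc d → ℝ) : Prop :=
  ∀ ξ : Euc d, ξ ≠ 0 →
    LinearMap.rank ((fderiv ℝ (fderiv ℝ ρ) ξ : Euc d →L[ℝ] (Euc d →L[ℝ] ℝ)) :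
      Euc d →ₗ[ℝ] (Euc d →L[ℝ] ℝ)) = (d - 1 : ℕ)

/-- The Fourier transform `f̂(ξ) = ∫ f(y) e^{−i⟨y,ξ⟩} dy` on `ℝ^d`. -/
def FTd {d : ℕ} (f : Euc d → ℂ) (ξ : Euc d) : ℂ :=
  ∫ y : Euc d, f y * Complex.exp (-(Complex.I * (⟪y, ξ⟫ : ℂ)))

/-- The Riesz mean `R^λ_{a,t} f(x) = (2π)^{-d} ∫ (1 - ρ(ξ)^a/t^a)_+^λ f̂(ξ) e^{i⟨x,ξ⟩} dξ`. -/
def RieszMean {d : ℕ} (ρ : Euc d → ℝ) (a lam t : ℝ) (f : Euc d → ℂ) (x : Euc d) : ℂ :=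
  (((2 * Real.pi) ^ d)⁻¹ : ℝ) •
    ∫ ξ : Euc d, ((max (1 - ρ ξ ^ a / t ^ a) 0) ^ lam : ℝ) •
      (FTd f ξ * Complex.exp (Complex.I * (⟪x, ξ⟫ : ℂ)))

/-- The critical index `λ(p) = d(1/p - 1/2) - 1/2`. -/
def criticalIndex (d : ℕ) (p : ℝ) : ℝ := (d : ℝ) * (1 / p - 1 / 2) - 1 / 2

/-- One-dimensional Fourier transform `φ̂(ϱ) = ∫ φ(s) e^{-isϱ} ds`. -/
def FT1 (φ : ℝ → ℂ) (ϱ : ℝ) : ℂ :=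
  ∫ s : ℝ, φ s * Complex.exp (-(Complex.I * (s : ℂ) * (ϱ : ℂ)))

/-- One-dimensional Fourier transform of a real-valued function. -/
def FT1R (Φ : ℝ → ℝ) : ℝ → ℂ := FT1 (fun s => (Φ s : ℂ))

/-- The pieces `h_{λ,ℓ}` of the decomposition of the Riesz multiplier. -/
def hfun (χ Φ Ψ : ℝ → ℝ) (lam : ℝ) : ℕ → ℝ → ℂ
  | 0 => fun ϱ => ((2 * Real.pi)⁻¹ * χ ϱ : ℝ) •
      ∫ u : ℝ, ((max (1 - u) 0) ^ lam : ℝ) • FT1R Φ (ϱ - u)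
  | (ℓ + 1) => fun ϱ => ((2 * Real.pi)⁻¹ * χ ϱ : ℝ) •
      ∫ u : ℝ, ((max (1 - u) 0) ^ lam : ℝ) •
        (((2 : ℝ) ^ ℓ) • FT1R Ψ ((2 : ℝ) ^ ℓ * (ϱ - u)))

/-- The data entering the construction of `h_{λ,ℓ}`: a cutoff `χ ∈ C_c^∞((1/2,2))`, an even
`Φ = Φ∘ ∈ C_c^∞(ℝ)` with `Φ∘ = 1` on `[-1/2,1/2]`, `supp Φ∘ ⊆ [-1,1]`, satisfying the moment
cancellation conditions, and `Ψ(x) = Φ∘(x/2) - Φ∘(x)`. -/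
structure HData (lam : ℝ) (N0 : ℕ) (χ Φ Ψ : ℝ → ℝ) : Prop where
  hχsm : ContDiff ℝ (⊤ : ℕ∞) χ
  hχsupp : Function.support χ ⊆ Set.Ioo (1/2 : ℝ) 2
  hΦsm : ContDiff ℝ (⊤ : ℕ∞) Φ
  hΦeven : ∀ s, Φ (-s) = Φ s
  hΦone : ∀ s : ℝ, |s| ≤ 1/2 → Φ s = 1
  hΦzero : ∀ s : ℝ, 1 ≤ |s| → Φ s = 0
  hΦcanc : ∀ j : ℕ, j ≤ N0 → (j : ℝ) ≠ lam →
    (∫ ϱ in Set.Ioi (0 : ℝ), ((ϱ ^ lam : ℝ) : ℂ) * iteratedDeriv j (FT1R Φ) ϱ) = 0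
  hΨ : Ψ = fun x => Φ (x / 2) - Φ x

/-- Inverse Fourier transform on `ℝ^d`. -/
def invFTd {d : ℕ} (m : Euc d → ℂ) (x : Euc d) : ℂ :=
  (((2 * Real.pi) ^ d)⁻¹ : ℝ) •
    ∫ ξ : Euc d, m ξ * Complex.exp (Complex.I * (⟪x, ξ⟫ : ℂ))

/-- The Fourier multiplier operator `m(D) f = (𝓕⁻¹ m) * f`. -/
def mulOp {d : ℕ} (m : Euc d → ℂ) (f : Euc d → ℂ) (x : Euc d) : ℂ :=
  ∫ y : Euc d, invFTd m (x - y) * f y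

/-- The Hardy–Littlewood maximal function. -/
def HLMaximal {d : ℕ} (w : Euc d → ℝ) (x : Euc d) : ℝ≥0∞ :=
  ⨆ r : {r : ℝ // 0 < r},
    (volume (Metric.ball x r.1))⁻¹ * ∫⁻ y in Metric.ball x r.1, ENNReal.ofReal (w y)

/-- `w` is an `A₁` weight. -/
structure IsA1Weight {d : ℕ} (w : Euc d → ℝ) : Prop where
  nonneg : ∀ x, 0 ≤ w x
  locInt : LocallyIntegrable w volume
  ne_zero : ¬ (w =ᵐ[(volume : Measure (Euc d))] (0 : Euc d → ℝ))
  maximal_le : ∃ C : ℝ, ∀ᵐ x ∂(volume : Measure (Euc d)),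
    HLMaximal w x ≤ ENNReal.ofReal (C * w x)

/-- `w` satisfies a reverse Hölder inequality with exponent `σ`. -/
def IsRH {d : ℕ} (σ : ℝ) (w : Euc d → ℝ) : Prop :=
  ∃ C : ℝ, ∀ (x : Euc d) (r : ℝ), 0 < r →
    ((volume (Metric.ball x r))⁻¹ *
        ∫⁻ y in Metric.ball x r, ENNReal.ofReal (w y) ^ σ) ^ (1 / σ) ≤
      ENNReal.ofReal C *
        ((volume (Metric.ball x r))⁻¹ * ∫⁻ y in Metric.ball x r, ENNReal.ofReal (w y))

/-- The weighted `L^p(w)` (quasi-)norm. -/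
def wLpNorm {d : ℕ} (p : ℝ) (w : Euc d → ℝ) (g : Euc d → ℂ) : ℝ≥0∞ :=
  (∫⁻ x, (‖g x‖₊ : ℝ≥0∞) ^ p * ENNReal.ofReal (w x)) ^ (1 / p)

/-- The weighted weak `L^{p,∞}(w)` (quasi-)norm. -/
def wWeakNorm {d : ℕ} (p : ℝ) (w : Euc d → ℝ) (g : Euc d → ℂ) : ℝ≥0∞ :=
  ⨆ α : {α : ℝ // 0 < α},
    ENNReal.ofReal α.1 *
      (∫⁻ x in {x : Euc d | α.1 < ‖g x‖}, ENNReal.ofReal (w x)) ^ (1 / p)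

/-- A (half-open, axes-parallel) cube `x + [0,s)^d` in `ℝ^d`. -/
def IsCube {d : ℕ} (Q : Set (Euc d)) : Prop :=
  ∃ (x : Euc d) (s : ℝ), 0 < s ∧ Q = {y : Euc d | ∀ i, y i ∈ Set.Ico (x i) (x i + s)}

/-- The average `⟨f⟩_{Q,p} = (|Q|⁻¹ ∫_Q |f|^p)^{1/p}`. -/
def cubeAvg {d : ℕ} (p : ℝ) (Q : Set (Euc d)) (f : Euc d → ℂ) : ℝ≥0∞ :=
  ((volume Q)⁻¹ * ∫⁻ x in Q, (‖f x‖₊ : ℝ≥0∞) ^ p) ^ (1 / p)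

/-- A `γ`-sparse (finite) family of cubes. -/
def IsSparseFamily {d : ℕ} (γ : ℝ) (𝔖 : Finset (Set (Euc d))) : Prop :=
  (∀ Q ∈ 𝔖, IsCube Q) ∧
  ∃ E : Set (Euc d) → Set (Euc d),
    (∀ Q ∈ 𝔖, MeasurableSet (E Q) ∧ E Q ⊆ Q ∧
      ENNReal.ofReal γ * volume Q ≤ volume (E Q)) ∧
    (𝔖 : Set (Set (Euc d))).Pairwise fun Q Q' => Disjoint (E Q) (E Q')

/-- The maximal sparse form `Λ*_{p,q}(f₁,f₂)` (supremum over `1/2`-sparse families). -/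
def sparseFormMax {d : ℕ} (p q : ℝ) (f₁ f₂ : Euc d → ℂ) : ℝ≥0∞ :=
  ⨆ 𝔖 : {𝔖 : Finset (Set (Euc d)) // IsSparseFamily (1/2) 𝔖},
    ∑ Q ∈ 𝔖.1, volume Q * cubeAvg p Q f₁ * cubeAvg q Q f₂

/-- The sparse bound `T ∈ Sp(p,q)`. -/
def SparseBound {d : ℕ} (p q : ℝ) (T : (Euc d → ℂ) → Euc d → ℂ) : Prop :=
  ∃ C : ℝ, ∀ f₁ f₂ : Euc d → ℂ,
    ContDiff ℝ (⊤ : ℕ∞) f₁ → HasCompactSupport f₁ →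
    ContDiff ℝ (⊤ : ℕ∞) f₂ → HasCompactSupport f₂ →
    ENNReal.ofReal ‖∫ x, T f₁ x * f₂ x‖ ≤ ENNReal.ofReal C * sparseFormMax p q f₁ f₂

/-- The exponent `r_*(p, p∘, r∘)`. -/
def rStar (d : ℕ) (p p0 r0 : ℝ) : ℝ :=
  if p ≤ 2 * ((d : ℝ) + 1) / ((d : ℝ) + 3) then
    (((d : ℝ) + 1) / ((d : ℝ) - 1) * (1 - 1 / p))⁻¹
  else
    ((1 / r0 * (((d : ℝ) + 3) / (2 * ((d : ℝ) + 1)) - 1 / p) +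
        1 / 2 * (1 / p - 1 / p0)) /
      (((d : ℝ) + 3) / (2 * ((d : ℝ) + 1)) - 1 / p0))⁻¹

/-- The exponent `q_*(p, p∘, r∘)`, the conjugate of `r_*(p, p∘, r∘)`. -/
def qStar (d : ℕ) (p p0 r0 : ℝ) : ℝ := (1 - 1 / rStar d p p0 r0)⁻¹

/-- The trapezoid `∏_d(λ)` with corners `P₁, P₂, P₃, P₄`. -/
def trapez (d : ℕ) (lam : ℝ) : Set (ℝ × ℝ) :=
  convexHull ℝ
    {((2*lam + (d:ℝ) + 1)/(2*(d:ℝ)), ((d:ℝ) - 2*lam - 1)/(2*(d:ℝ))),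
     ((2*lam + (d:ℝ) + 1)/(2*(d:ℝ)),
       ((d:ℝ) - 1)/(2*(d:ℝ)) + lam*((d:ℝ) + 1)/((d:ℝ)*((d:ℝ) - 1))),
     (((d:ℝ) - 1)/(2*(d:ℝ)) + lam*((d:ℝ) + 1)/((d:ℝ)*((d:ℝ) - 1)),
       (2*lam + (d:ℝ) + 1)/(2*(d:ℝ))),
     (((d:ℝ) - 2*lam - 1)/(2*(d:ℝ)), (2*lam + (d:ℝ) + 1)/(2*(d:ℝ)))}

/-- A dyadic cube `2^k(m + [0,1)^d)`, recorded by its generation `k` and position `m`. -/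
structure DyadicCube (d : ℕ) where
  k : ℤ
  m : Fin d → ℤ
deriving DecidableEq

/-- The subset of `ℝ^d` corresponding to a dyadic cube. -/
def DyadicCube.set {d : ℕ} (Q : DyadicCube d) : Set (Euc d) :=
  {x : Euc d | ∀ i, x i ∈ Set.Ico ((2:ℝ) ^ Q.k * (Q.m i : ℝ)) ((2:ℝ) ^ Q.k * ((Q.m i : ℝ) + 1))}

/-- `μ(𝔔) = Σ_{Q ∈ 𝔔} |Q|`. -/
def dyadicMeasure {d : ℕ} (𝔔 : Finset (DyadicCube d)) : ℝ≥0∞ :=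
  ∑ Q ∈ 𝔔, volume Q.set

/-- The class `𝒴_M` of normalized bump functions. -/
def MemYM (M : ℕ) (χ : ℝ → ℂ) : Prop :=
  ContDiff ℝ (M : ℕ∞) χ ∧ Function.support χ ⊆ Set.Ioo (1/2 : ℝ) 2 ∧
    ∑ ν ∈ Finset.range (M + 1), (⨆ s : ℝ, ‖iteratedDeriv ν χ s‖) ≤ 1

/-- The function `Σ_{j ≥ 1} 2^{j(d+1)/2} m_j(D)[Σ_{Q ∈ 𝔇_j} f_Q]` appearing in `VBR(p,r)`,
where `m_j(ξ) = χ_j(2^j(1 - ρ(ξ)))`. -/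
def vbrSum {d : ℕ} (ρ : Euc d → ℝ) (χ : ℕ → ℝ → ℂ) (𝔉 : Finset (DyadicCube d))
    (f : DyadicCube d → Euc d → ℂ) (x : Euc d) : ℂ :=
  Finset.sum ((𝔉.image (fun Q => Q.k)).filter (fun j => 1 ≤ j)) fun (j : ℤ) =>
    ((2:ℝ) ^ ((j : ℝ) * ((d : ℝ) + 1) / 2)) •
      mulOp (fun ξ => χ j.toNat ((2:ℝ) ^ j * (1 - ρ ξ)))
        (fun y => ∑ Q ∈ 𝔉.filter (fun Q' => Q'.k = j), f Q y) x

/-- The statement `VBR(p,r)`. -/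
def VBR (d : ℕ) (ρ : Euc d → ℝ) (p r : ℝ) : Prop :=
  ∃ (M : ℕ) (C : ℝ), 1 ≤ M ∧
    ∀ χ : ℕ → ℝ → ℂ, (∀ j : ℕ, 1 ≤ j → MemYM M (χ j)) →
    ∀ (𝔉 : Finset (DyadicCube d)) (f : DyadicCube d → Euc d → ℂ),
      (∀ Q ∈ 𝔉, Function.support (f Q) ⊆ closure Q.set) →
      eLpNorm (vbrSum ρ χ 𝔉 f) (ENNReal.ofReal r) volume ≤
        ENNReal.ofReal C *
          (∑ Q ∈ 𝔉, volume Q.set * eLpNorm (f Q) (ENNReal.ofReal p) volume ^ r) ^ (1 / r)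

/-- `Hyp(p∘, r∘)`: `VBR(p,r)` holds for all `p ∈ [2(d+1)/(d+3), p∘)`
and all `r ∈ [p, r_*(p,p∘,r∘))`. -/
def Hyp (d : ℕ) (ρ : Euc d → ℝ) (p0 r0 : ℝ) : Prop :=
  ∀ p r : ℝ, 2 * ((d : ℝ) + 1) / ((d : ℝ) + 3) ≤ p → p < p0 →
    p ≤ r → r < rStar d p p0 r0 → VBR d ρ p r

/-- The operator `A_{λ,ℓ} = 2^{ℓ(λ + (d+1)/2)} h_{λ,ℓ}(ρ(D))`. -/
def Aop {d : ℕ} (ρ : Euc d → ℝ) (h : ℕ → ℝ → ℂ) (lam : ℝ) (ℓ : ℕ)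
    (f : Euc d → ℂ) (x : Euc d) : ℂ :=
  ((2:ℝ) ^ ((ℓ : ℝ) * (lam + ((d : ℝ) + 1) / 2))) • mulOp (fun ξ => h ℓ (ρ ξ)) f x

/-- `𝒜_{s,𝔔} F = Σ_{ℓ ≥ s} Σ_{Q ∈ 𝔔_{ℓ-s}} A_{λ,ℓ}[F_Q 1_Q]`. -/
def AopSum {d : ℕ} (ρ : Euc d → ℝ) (h : ℕ → ℝ → ℂ) (lam : ℝ) (s : ℕ)
    (𝔔 : Finset (DyadicCube d)) (F : DyadicCube d → Euc d → ℂ) (x : Euc d) : ℂ :=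
  ∑ Q ∈ 𝔔, Aop ρ h lam (Q.k.toNat + s) (Q.set.indicator (F Q)) x

/-- `Ξ_{s,𝔔}[F,β] = Σ_{ℓ ≥ s} Σ_{Q ∈ 𝔔_{ℓ-s}} β(Q) A_{λ,ℓ}[F_Q 1_Q]`. -/
def XiSum {d : ℕ} (ρ : Euc d → ℝ) (h : ℕ → ℝ → ℂ) (lam : ℝ) (s : ℕ)
    (𝔔 : Finset (DyadicCube d)) (F : DyadicCube d → Euc d → ℂ)
    (β : DyadicCube d → ℂ) (x : Euc d) : ℂ :=
  ∑ Q ∈ 𝔔, β Q * Aop ρ h lam (Q.k.toNat + s) (Q.set.indicator (F Q)) x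

/-- `‖F‖_{ℓ^∞(L^p)} = sup_{Q ∈ 𝔔} ‖F_Q‖_{L^p}`. -/
def supLp {d : ℕ} (p : ℝ) (𝔔 : Finset (DyadicCube d))
    (F : DyadicCube d → Euc d → ℂ) : ℝ≥0∞ :=
  ⨆ Q ∈ 𝔔, eLpNorm (F Q) (ENNReal.ofReal p) volume

/-- `‖β‖_{ℓ^{r,1}(μ)} = ∫_0^∞ μ({Q ∈ 𝔔 : |β(Q)| > α})^{1/r} dα`. -/
def lorentzNorm {d : ℕ} (r : ℝ) (𝔔 : Finset (DyadicCube d))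
    (β : DyadicCube d → ℂ) : ℝ≥0∞ :=
  ∫⁻ α in Set.Ioi (0:ℝ),
    (∑ Q ∈ 𝔔, if α < ‖β Q‖ then volume Q.set else 0) ^ (1 / r)

open scoped FourierTransform in
lemma cs_selfadj {d : ℕ} {f g : Euc d → ℂ} (hf : Integrable f) (hg : Integrable g) :
    ∫ ξ, 𝓕 f ξ * g ξ = ∫ x, f x * 𝓕 g x := by
  have := VectorFourier.integral_fourierIntegral_smul_eq_flip (L := innerₗ (Euc d))
    Real.continuous_fourierChar continuous_inner hf hg
  simp only [flip_innerₗ, smul_eq_mul] at this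
  exact this

open scoped FourierTransform in
lemma cs_fourier_cont {d : ℕ} {f : Euc d → ℂ} (hf : Integrable f) : Continuous (𝓕 f) :=
  VectorFourier.fourierIntegral_continuous Real.continuous_fourierChar continuous_inner hf

open scoped FourierTransform in
lemma cs_fourier_le {d : ℕ} (f : Euc d → ℂ) (ξ : Euc d) : ‖𝓕 f ξ‖ ≤ ∫ x, ‖f x‖ :=
  VectorFourier.norm_fourierIntegral_le_integral_norm _ _ _ _ _

lemma cs_gauss_int {d : ℕ} {b : ℝ} (hb : 0 < b) (x : Euc d) :
    Integrable (fun ξ : Euc d => Complex.exp (-(b : ℂ) * ‖ξ‖ ^ 2 + 2 * Real.pi * Complex.I * (⟪x, ξ⟫ : ℝ))) := by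
  exact GaussianFourier.integrable_cexp_neg_mul_sq_norm_add (by simpa using hb) _ _

open scoped FourierTransform ComplexConjugate in
lemma cs_gauss0 {d : ℕ} {f : Euc d → ℂ} (hf : Integrable f) {b : ℝ} (hb : 0 < b) :
    ∫⁻ ξ, ENNReal.ofReal (Real.exp (-b * ‖ξ‖ ^ 2)) * ‖𝓕 f ξ‖ₑ ^ 2 ≤
      ∫⁻ x, ‖f x‖ₑ * ∫⁻ y, ‖f y‖ₑ *
        ENNReal.ofReal ((Real.pi / b) ^ ((d : ℝ) / 2) * Real.exp (-Real.pi ^ 2 * ‖x - y‖ ^ 2 / b)) := by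
  set h : Euc d → ℂ := fun ξ => Complex.exp (-(b : ℂ) * ‖ξ‖ ^ 2) * conj (𝓕 f ξ) with hh
  have hg0 : Integrable (fun ξ : Euc d => Complex.exp (-(b : ℂ) * ‖ξ‖ ^ 2)) := by
    simpa using cs_gauss_int hb (0 : Euc d)
  have hbd : ∀ ξ, ‖𝓕 f ξ‖ ≤ ∫ x, ‖f x‖ := cs_fourier_le f
  have hh_int : Integrable h := by
    refine hg0.mul_bdd (c := ∫ x, ‖f x‖) ?_ ?_
    · exact (Complex.continuous_conj.comp (cs_fourier_cont hf)).aestronglyMeasurable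
    · exact ae_of_all _ fun ξ => by simpa using hbd ξ
  have hker : ∀ x, conj (𝓕 h x) = ∫ y, f y *
      (((Real.pi / b) ^ ((d : ℝ) / 2) * Real.exp (-Real.pi ^ 2 * ‖x - y‖ ^ 2 / b) : ℝ) : ℂ) := by
    intro x
    have h1 := cs_selfadj hf (cs_gauss_int hb x)
    have h2 : ∀ y, 𝓕 (fun ξ : Euc d => Complex.exp (-(b : ℂ) * ‖ξ‖ ^ 2 + 2 * Real.pi * Complex.I * (⟪x, ξ⟫ : ℝ))) y
        = (((Real.pi / b) ^ ((d : ℝ) / 2) * Real.exp (-Real.pi ^ 2 * ‖x - y‖ ^ 2 / b) : ℝ) : ℂ) := by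
      intro y
      rw [fourier_gaussian_innerProductSpace' (by simpa using hb)]
      have : (0:ℝ) ≤ Real.pi / b := by positivity
      simp only [finrank_euclideanSpace, Fintype.card_fin]
      push_cast [Complex.ofReal_cpow this]
      rfl
    simp_rw [h2] at h1
    rw [← h1, Real.fourier_eq', ← integral_conj]
    congr 1
    ext ξ
    simp only [hh, smul_eq_mul, map_mul, ← Complex.exp_conj, Complex.conj_conj]
    rw [Complex.exp_add, real_inner_comm x ξ]
    have h2' : conj (2 : ℂ) = 2 := Complex.conj_ofNat 2
    simp [h2']
    ring_nf
  have hL : ∫⁻ ξ, ENNReal.ofReal (Real.exp (-b * ‖ξ‖ ^ 2)) * ‖𝓕 f ξ‖ₑ ^ 2 = ‖∫ ξ, 𝓕 f ξ * h ξ‖ₑ := by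
    have e1 : ∀ ξ, 𝓕 f ξ * h ξ = ((Real.exp (-b * ‖ξ‖ ^ 2) * ‖𝓕 f ξ‖ ^ 2 : ℝ) : ℂ) := by
      intro ξ
      have := Complex.mul_conj' (𝓕 f ξ)
      simp only [hh]
      push_cast
      rw [← this]; ring
    have i1 : Integrable (fun ξ => 𝓕 f ξ * h ξ) :=
      hh_int.bdd_mul (c := ∫ x, ‖f x‖) (cs_fourier_cont hf).aestronglyMeasurable (ae_of_all _ hbd)
    simp_rw [e1] at i1 ⊢
    have i2 : Integrable (fun ξ => Real.exp (-b * ‖ξ‖ ^ 2) * ‖𝓕 f ξ‖ ^ 2) := by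
      have := i1.re
      simpa only [RCLike.re_eq_complex_re, Complex.ofReal_re] using this
    rw [integral_complex_ofReal, ← ofReal_norm, Complex.norm_real, Real.norm_of_nonneg
      (integral_nonneg fun _ => by positivity), ofReal_integral_eq_lintegral_ofReal i2
      (ae_of_all _ fun _ => by positivity)]
    congr 1; ext ξ
    rw [ENNReal.ofReal_mul (by positivity), ENNReal.ofReal_pow (by positivity), ofReal_norm]
  rw [hL, cs_selfadj hf hh_int]
  refine (enorm_integral_le_lintegral_enorm _).trans (lintegral_mono fun x => ?_)
  rw [enorm_mul]
  gcongr
  have : ‖𝓕 h x‖ₑ = ‖conj (𝓕 h x)‖ₑ := by rw [← ofReal_norm, ← ofReal_norm, RCLike.norm_conj]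
  rw [this, hker]
  refine (enorm_integral_le_lintegral_enorm _).trans (lintegral_mono fun y => ?_)
  rw [enorm_mul, ← ofReal_norm (( _ : ℝ) : ℂ), Complex.norm_real, Real.norm_of_nonneg (by positivity)]

open scoped FourierTransform in
lemma cs_gauss {d : ℕ} {f : Euc d → ℂ} (hf : Integrable f) {b : ℝ} (hb : 0 < b) (ζ : Euc d) :
    ∫⁻ ξ, ENNReal.ofReal (Real.exp (-b * ‖ξ - ζ‖ ^ 2)) * ‖𝓕 f ξ‖ₑ ^ 2 ≤
      ∫⁻ x, ‖f x‖ₑ * ∫⁻ y, ‖f y‖ₑ *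
        ENNReal.ofReal ((Real.pi / b) ^ ((d : ℝ) / 2) * Real.exp (-Real.pi ^ 2 * ‖x - y‖ ^ 2 / b)) := by
  set f' : Euc d → ℂ := fun x => Complex.exp ((-2 * Real.pi * ⟪x, ζ⟫ : ℝ) * Complex.I) * f x with hf'
  have hn : ∀ x, ‖f' x‖ = ‖f x‖ := by
    intro x
    rw [hf', norm_mul, Complex.norm_exp_ofReal_mul_I, one_mul]
  have he : ∀ x, ‖f' x‖ₑ = ‖f x‖ₑ := by
    intro x; rw [← ofReal_norm, hn, ofReal_norm]
  have hi : Integrable f' := by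
    refine hf.bdd_mul (c := 1) ?_ (ae_of_all _ fun x => (Complex.norm_exp_ofReal_mul_I _).le)
    exact Continuous.aestronglyMeasurable (by fun_prop)
  have hF : ∀ ξ, 𝓕 f' ξ = 𝓕 f (ξ + ζ) := by
    intro ξ
    rw [Real.fourier_eq', Real.fourier_eq']
    congr 1; ext x
    simp only [hf', smul_eq_mul]
    rw [← mul_assoc, ← Complex.exp_add, inner_add_right]
    congr 2
    push_cast; ring
  have := cs_gauss0 hi hb
  simp_rw [he, hF] at this
  refine le_trans (le_of_eq ?_) this
  rw [← lintegral_add_right_eq_self _ ζ]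
  simp

lemma cs_gauss_lint {d : ℕ} {c : ℝ} (hc : 0 < c) (x : Euc d) :
    ∫⁻ y, ENNReal.ofReal (Real.exp (-c * ‖x - y‖ ^ 2)) =
      ENNReal.ofReal ((Real.pi / c) ^ ((d : ℝ) / 2)) := by
  rw [lintegral_sub_left_eq_self (fun y => ENNReal.ofReal (Real.exp (-c * ‖y‖ ^ 2))) x]
  have hi : Integrable (fun ξ : Euc d => Real.exp (-c * ‖ξ‖ ^ 2)) := by
    have := (cs_gauss_int hc (0 : Euc d)).norm
    refine this.congr (ae_of_all _ fun ξ => ?_)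
    simp only [Complex.norm_exp, inner_zero_left]
    congr 1
    rw [← Complex.ofReal_pow]
    simp [-Complex.ofReal_pow]
  rw [← ofReal_integral_eq_lintegral_ofReal hi (ae_of_all _ fun _ => by positivity),
    GaussianFourier.integral_rexp_neg_mul_sq_norm hc]
  simp

lemma cs_two_mul (a b : ℝ≥0∞) : a * b ≤ a ^ 2 + b ^ 2 := by
  rcases le_total a b with h | h
  · calc a * b ≤ b * b := by gcongr
      _ = b ^ 2 := (sq b).symm
      _ ≤ _ := le_add_self
  · calc a * b ≤ a * a := by gcongr
      _ = a ^ 2 := (sq a).symm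
      _ ≤ _ := le_self_add

open scoped FourierTransform in
lemma cs_plancherel {d : ℕ} {f : Euc d → ℂ} (hf : Integrable f) :
    ∫⁻ ξ, ‖𝓕 f ξ‖ₑ ^ 2 ≤ 2 * ∫⁻ x, ‖f x‖ₑ ^ 2 := by
  have key : ∀ b : ℝ, 0 < b → ∫⁻ ξ, ENNReal.ofReal (Real.exp (-b * ‖ξ‖ ^ 2)) * ‖𝓕 f ξ‖ₑ ^ 2 ≤
      2 * ∫⁻ x, ‖f x‖ₑ ^ 2 := by
    intro b hb
    refine (cs_gauss0 hf hb).trans ?_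
    set k : Euc d → ℝ≥0∞ := fun z => ENNReal.ofReal
      ((Real.pi / b) ^ ((d : ℝ) / 2) * Real.exp (-Real.pi ^ 2 * ‖z‖ ^ 2 / b)) with hk
    have hkm : Measurable k := by rw [hk]; fun_prop
    have hk1 : ∀ x, ∫⁻ y, k (x - y) = 1 := by
      intro x
      have hp := Real.pi_pos
      simp only [hk]
      have : ∀ y : Euc d, ENNReal.ofReal ((Real.pi / b) ^ ((d : ℝ) / 2) * Real.exp (-Real.pi ^ 2 * ‖x - y‖ ^ 2 / b))
          = ENNReal.ofReal ((Real.pi / b) ^ ((d : ℝ) / 2)) * ENNReal.ofReal (Real.exp (-(Real.pi ^ 2 / b) * ‖x - y‖ ^ 2)) := by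
        intro y
        rw [← ENNReal.ofReal_mul (by positivity)]
        congr 3; ring
      simp_rw [this]
      rw [lintegral_const_mul _ (by fun_prop), cs_gauss_lint (by positivity),
        ← ENNReal.ofReal_mul (by positivity), ← Real.mul_rpow (by positivity) (by positivity)]
      have : Real.pi / b * (Real.pi / (Real.pi ^ 2 / b)) = 1 := by field_simp
      rw [this]; simp
    have hk2 : ∀ y, ∫⁻ x, k (x - y) = 1 := by
      intro y
      rw [← hk1 y]
      congr 1; ext x
      simp only [hk]
      rw [norm_sub_rev]
    have hfm : AEMeasurable (fun x => ‖f x‖ₑ) := hf.aestronglyMeasurable.enorm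
    have hfm2 : AEMeasurable (fun x => ‖f x‖ₑ ^ 2) := hfm.pow_const 2
    calc ∫⁻ x, ‖f x‖ₑ * ∫⁻ y, ‖f y‖ₑ * k (x - y)
        = ∫⁻ x, ∫⁻ y, ‖f x‖ₑ * (‖f y‖ₑ * k (x - y)) := by
          congr 1; ext x
          rw [lintegral_const_mul'']
          exact hfm.mul (by fun_prop)
      _ ≤ ∫⁻ x, ∫⁻ y, ((‖f x‖ₑ ^ 2 * k (x - y)) + (‖f y‖ₑ ^ 2 * k (x - y))) := by
          refine lintegral_mono fun x => lintegral_mono fun y => ?_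
          calc ‖f x‖ₑ * (‖f y‖ₑ * k (x - y)) = (‖f x‖ₑ * ‖f y‖ₑ) * k (x - y) := by ring
            _ ≤ (‖f x‖ₑ ^ 2 + ‖f y‖ₑ ^ 2) * k (x - y) := by
                gcongr; exact cs_two_mul _ _
            _ = _ := by ring
      _ = ∫⁻ x, (‖f x‖ₑ ^ 2 + ∫⁻ y, (‖f y‖ₑ ^ 2 * k (x - y))) := by
          congr 1; ext x
          rw [lintegral_add_left (by fun_prop), lintegral_const_mul _ (by fun_prop), hk1, mul_one]
      _ = (∫⁻ x, ‖f x‖ₑ ^ 2) + ∫⁻ x, ∫⁻ y, (‖f y‖ₑ ^ 2 * k (x - y)) := by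
          rw [lintegral_add_left' hfm2]
      _ = (∫⁻ x, ‖f x‖ₑ ^ 2) + ∫⁻ y, ∫⁻ x, (‖f y‖ₑ ^ 2 * k (x - y)) := by
          rw [lintegral_lintegral_swap]
          have : AEMeasurable (fun p : Euc d × Euc d => ‖f p.2‖ₑ) (volume.prod volume) :=
            hfm.comp_snd
          have hkm2 : Measurable (fun p : Euc d × Euc d => k (p.1 - p.2)) := by fun_prop
          exact ((this.pow_const 2).mul hkm2.aemeasurable)
      _ = (∫⁻ x, ‖f x‖ₑ ^ 2) + ∫⁻ x, ‖f x‖ₑ ^ 2 := by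
          congr 2; ext y
          rw [lintegral_const_mul _ (by fun_prop), hk2, mul_one]
      _ = 2 * ∫⁻ x, ‖f x‖ₑ ^ 2 := by rw [two_mul]
  have hmeas : Measurable (fun ξ => ‖𝓕 f ξ‖ₑ) := (cs_fourier_cont hf).measurable.enorm
  have hlim : ∀ ξ, liminf (fun n : ℕ => ENNReal.ofReal (Real.exp (-(1 / ((n : ℝ) + 1)) * ‖ξ‖ ^ 2)) * ‖𝓕 f ξ‖ₑ ^ 2) atTop
      = ‖𝓕 f ξ‖ₑ ^ 2 := by
    intro ξ
    apply Tendsto.liminf_eq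
    have h0 : Tendsto (fun n : ℕ => -(1 / ((n : ℝ) + 1)) * ‖ξ‖ ^ 2) atTop (𝓝 0) := by
      have := (tendsto_one_div_add_atTop_nhds_zero_nat (𝕜 := ℝ)).neg.mul_const (‖ξ‖ ^ 2)
      simpa using this
    have h1 : Tendsto (fun n : ℕ => ENNReal.ofReal (Real.exp (-(1 / ((n : ℝ) + 1)) * ‖ξ‖ ^ 2))) atTop (𝓝 1) := by
      have := ENNReal.tendsto_ofReal ((Real.continuous_exp.tendsto 0).comp h0)
      simpa using this
    have := ENNReal.Tendsto.mul_const (b := ‖𝓕 f ξ‖ₑ ^ 2) h1 (Or.inl one_ne_zero)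
    simpa using this
  calc ∫⁻ ξ, ‖𝓕 f ξ‖ₑ ^ 2 = ∫⁻ ξ, liminf (fun n : ℕ => ENNReal.ofReal (Real.exp (-(1 / ((n : ℝ) + 1)) * ‖ξ‖ ^ 2)) * ‖𝓕 f ξ‖ₑ ^ 2) atTop := by
        simp_rw [hlim]
    _ ≤ liminf (fun n : ℕ => ∫⁻ ξ, ENNReal.ofReal (Real.exp (-(1 / ((n : ℝ) + 1)) * ‖ξ‖ ^ 2)) * ‖𝓕 f ξ‖ₑ ^ 2) atTop :=
        lintegral_liminf_le fun n => by fun_prop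
    _ ≤ 2 * ∫⁻ x, ‖f x‖ₑ ^ 2 := by
        refine liminf_le_of_le (by isBoundedDefault) fun c hc => ?_
        obtain ⟨n, hn⟩ := hc.exists
        exact hn.trans (key _ (by positivity))

lemma cs_cube_meas {d : ℕ} (Q : DyadicCube d) : MeasurableSet Q.set := by
  have : Q.set = ⋂ i, (fun x : Euc d => x i) ⁻¹' Set.Ico ((2:ℝ) ^ Q.k * (Q.m i : ℝ)) ((2:ℝ) ^ Q.k * ((Q.m i : ℝ) + 1)) := by
    ext x; simp [DyadicCube.set]
  rw [this]
  exact MeasurableSet.iInter fun i => (by fun_prop : Measurable (fun x : Euc d => x i)) measurableSet_Ico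

lemma cs_cube_vol {d : ℕ} (Q : DyadicCube d) : volume Q.set = ENNReal.ofReal (((2:ℝ) ^ Q.k) ^ d) := by
  rw [← (PiLp.volume_preserving_toLp (Fin d)).measure_preimage (cs_cube_meas Q).nullMeasurableSet]
  have : (WithLp.toLp 2 : (Fin d → ℝ) → Euc d) ⁻¹' Q.set = Set.pi Set.univ fun i =>
      Set.Ico ((2:ℝ) ^ Q.k * (Q.m i : ℝ)) ((2:ℝ) ^ Q.k * ((Q.m i : ℝ) + 1)) := by
    ext x; simp [DyadicCube.set]
  rw [this, Real.volume_pi_Ico]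
  have : ∀ i, (2:ℝ) ^ Q.k * ((Q.m i : ℝ) + 1) - (2:ℝ) ^ Q.k * (Q.m i : ℝ) = (2:ℝ) ^ Q.k := by
    intro i; ring
  simp_rw [this]
  rw [Finset.prod_const, ENNReal.ofReal_pow (by positivity)]
  simp

lemma cs_cube_disj {d : ℕ} {Q Q' : DyadicCube d} (hk : Q.k = Q'.k) (hne : Q ≠ Q') :
    Disjoint Q.set Q'.set := by
  rw [Set.disjoint_left]
  intro x hx hx'
  apply hne
  have : Q.m = Q'.m := by
    ext i
    have h1 := hx i
    have h2 := hx' i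
    rw [← hk] at h2
    have hp : (0:ℝ) < 2 ^ Q.k := by positivity
    have a1 : (Q.m i : ℝ) < Q'.m i + 1 := lt_of_mul_lt_mul_left (h1.1.trans_lt h2.2) hp.le
    have a2 : (Q'.m i : ℝ) < Q.m i + 1 := lt_of_mul_lt_mul_left (h2.1.trans_lt h1.2) hp.le
    have b1 : Q.m i < Q'.m i + 1 := by exact_mod_cast a1
    have b2 : Q'.m i < Q.m i + 1 := by exact_mod_cast a2
    omega
  cases Q; cases Q'; simp_all

lemma cs_cube_diam {d : ℕ} {Q : DyadicCube d} {y z : Euc d} (hy : y ∈ Q.set) (hz : z ∈ Q.set) :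
    ‖y - z‖ ^ 2 ≤ d * ((2:ℝ) ^ Q.k) ^ 2 := by
  rw [EuclideanSpace.norm_sq_eq]
  calc ∑ i, ‖(y - z) i‖ ^ 2 ≤ ∑ i : Fin d, ((2:ℝ) ^ Q.k) ^ 2 := by
        refine Finset.sum_le_sum fun i _ => ?_
        have h1 := hy i
        have h2 := hz i
        have : |(y - z) i| ≤ (2:ℝ) ^ Q.k := by
          rw [PiLp.sub_apply, abs_le]
          constructor <;> nlinarith [h1.1, h1.2, h2.1, h2.2]
        rw [Real.norm_eq_abs]
        gcongr
    _ = _ := by simp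

lemma cs_sum_cubes {d : ℕ} {k : ℤ} {S : Finset (DyadicCube d)} (hS : ∀ Q ∈ S, Q.k = k)
    (h : Euc d → ℝ≥0∞) (hsupp : ∀ x, (∀ Q ∈ S, x ∉ Q.set) → h x = 0) :
    ∫⁻ x, h x = ∑ Q ∈ S, ∫⁻ x in Q.set, h x := by
  rw [← lintegral_biUnion_finset]
  · rw [setLIntegral_eq_of_support_subset]
    intro x hx
    by_contra hcon
    exact hx (hsupp x fun Q hQ hxQ => hcon (Set.mem_biUnion hQ hxQ))
  · intro Q hQ Q' hQ' hne
    exact cs_cube_disj ((hS Q hQ).trans (hS Q' hQ').symm) hne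
  · intro Q _; exact cs_cube_meas Q

lemma cs_conv_bound {d : ℕ} {k : ℤ} {S : Finset (DyadicCube d)} (hS : ∀ Q ∈ S, Q.k = k)
    {f : Euc d → ℂ} (hsupp : ∀ x, (∀ Q ∈ S, x ∉ Q.set) → f x = 0) {A : ℝ≥0∞}
    (hA : ∀ Q ∈ S, ∫⁻ y in Q.set, ‖f y‖ₑ ≤ A) {r : ℝ} (hr : r = (2:ℝ) ^ (-k)) (x : Euc d) :
    ∫⁻ y, ‖f y‖ₑ * ENNReal.ofReal (Real.exp (-(Real.pi * r ^ 2) * ‖x - y‖ ^ 2)) ≤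
      A * ENNReal.ofReal (Real.exp (Real.pi * d) * 2 ^ ((d : ℝ) / 2)) := by
  have hr0 : 0 < r := by rw [hr]; positivity
  have hrk : (2:ℝ) ^ k = r⁻¹ := by rw [hr, zpow_neg, inv_inv]
  have hp := Real.pi_pos
  set V : ℝ≥0∞ := ENNReal.ofReal ((r⁻¹) ^ d) with hV
  have hV0 : V ≠ 0 := by
    rw [hV]; simp only [ne_eq, ENNReal.ofReal_eq_zero, not_le]; positivity
  have hVt : V ≠ ⊤ := ENNReal.ofReal_ne_top
  set G' : Euc d → ℝ≥0∞ := fun z => ENNReal.ofReal (Real.exp (-(Real.pi * r ^ 2 / 2) * ‖x - z‖ ^ 2)) with hG'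
  set E : ℝ≥0∞ := ENNReal.ofReal (Real.exp (Real.pi * d)) with hE
  have hpt : ∀ Q ∈ S, ∀ y ∈ Q.set, ∀ z ∈ Q.set,
      ENNReal.ofReal (Real.exp (-(Real.pi * r ^ 2) * ‖x - y‖ ^ 2)) ≤ E * G' z := by
    intro Q hQ y hy z hz
    rw [hE, hG', ← ENNReal.ofReal_mul (by positivity), ← Real.exp_add]
    apply ENNReal.ofReal_le_ofReal
    apply Real.exp_le_exp.2
    have h1 := cs_cube_diam hy hz
    rw [hS Q hQ, hrk] at h1
    have h2 : ‖x - z‖ ≤ ‖x - y‖ + ‖y - z‖ := norm_sub_le_norm_sub_add_norm_sub x y z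
    have h3 : ‖x - z‖ ^ 2 ≤ 2 * ‖x - y‖ ^ 2 + 2 * ‖y - z‖ ^ 2 := by
      nlinarith [norm_nonneg (x - z), norm_nonneg (x - y), norm_nonneg (y - z), sq_nonneg (‖x - y‖ - ‖y - z‖)]
    have h4 : r ^ 2 * ‖y - z‖ ^ 2 ≤ (d : ℝ) := by
      calc r ^ 2 * ‖y - z‖ ^ 2 ≤ r ^ 2 * ((d : ℝ) * (r⁻¹) ^ 2) := by gcongr
        _ = (d : ℝ) := by field_simp
    have h5 : r ^ 2 * ‖x - z‖ ^ 2 ≤ 2 * (r ^ 2 * ‖x - y‖ ^ 2) + 2 * d := by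
      nlinarith [mul_le_mul_of_nonneg_left h3 (sq_nonneg r)]
    nlinarith [mul_le_mul_of_nonneg_left h5 hp.le]
  have hQ : ∀ Q ∈ S, (∫⁻ y in Q.set, ‖f y‖ₑ * ENNReal.ofReal (Real.exp (-(Real.pi * r ^ 2) * ‖x - y‖ ^ 2))) * V
      ≤ A * E * ∫⁻ z in Q.set, G' z := by
    intro Q hQ
    have hvol : volume Q.set = V := by rw [cs_cube_vol, hS Q hQ, hrk]
    have h1 : ∀ y ∈ Q.set, ENNReal.ofReal (Real.exp (-(Real.pi * r ^ 2) * ‖x - y‖ ^ 2)) ≤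
        E * (∫⁻ z in Q.set, G' z) * V⁻¹ := by
      intro y hy
      rw [← div_eq_mul_inv, ENNReal.le_div_iff_mul_le (Or.inl hV0) (Or.inl hVt)]
      calc _ = ∫⁻ z in Q.set, ENNReal.ofReal (Real.exp (-(Real.pi * r ^ 2) * ‖x - y‖ ^ 2)) := by
            rw [setLIntegral_const, hvol]
        _ ≤ ∫⁻ z in Q.set, E * G' z := setLIntegral_mono' (cs_cube_meas Q) fun z hz => hpt Q hQ y hy z hz
        _ = _ := by rw [lintegral_const_mul _ (by fun_prop)]
    have hEt : E * (∫⁻ z in Q.set, G' z) * V⁻¹ ≠ ⊤ := by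
      refine ENNReal.mul_ne_top (ENNReal.mul_ne_top ENNReal.ofReal_ne_top ?_) (by simpa using hV0)
      refine ne_top_of_le_ne_top ?_ (setLIntegral_le_lintegral _ _)
      rw [hG', cs_gauss_lint (by positivity)]
      exact ENNReal.ofReal_ne_top
    calc _ ≤ (∫⁻ y in Q.set, ‖f y‖ₑ * (E * (∫⁻ z in Q.set, G' z) * V⁻¹)) * V := by
          gcongr ?_ * _
          refine setLIntegral_mono' (cs_cube_meas Q) fun y hy => ?_
          gcongr
          exact h1 y hy
      _ = (∫⁻ y in Q.set, ‖f y‖ₑ) * (E * (∫⁻ z in Q.set, G' z)) * (V⁻¹ * V) := by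
          rw [lintegral_mul_const' _ _ hEt]; ring
      _ = (∫⁻ y in Q.set, ‖f y‖ₑ) * (E * (∫⁻ z in Q.set, G' z)) := by
          rw [ENNReal.inv_mul_cancel hV0 hVt, mul_one]
      _ ≤ A * (E * (∫⁻ z in Q.set, G' z)) := by gcongr; exact hA Q hQ
      _ = _ := by ring
  rw [← ENNReal.mul_le_mul_iff_left hV0 hVt]
  rw [cs_sum_cubes hS _ (fun y hy => by rw [hsupp y hy]; simp), Finset.sum_mul]
  calc _ ≤ ∑ Q ∈ S, A * E * ∫⁻ z in Q.set, G' z := Finset.sum_le_sum hQ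
    _ = A * E * ∫⁻ z in ⋃ Q ∈ S, Q.set, G' z := by
        rw [← Finset.mul_sum, lintegral_biUnion_finset]
        · intro Q hQ Q' hQ' hne
          exact cs_cube_disj ((hS Q hQ).trans (hS Q' hQ').symm) hne
        · intro Q _; exact cs_cube_meas Q
    _ ≤ A * E * ∫⁻ z, G' z := mul_le_mul_right (setLIntegral_le_lintegral _ _) _
    _ = A * (ENNReal.ofReal (Real.exp (Real.pi * d) * 2 ^ ((d : ℝ) / 2)) * V) := by
        rw [hG', cs_gauss_lint (by positivity), hE, hV, mul_assoc, ← ENNReal.ofReal_mul (by positivity),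
          ← ENNReal.ofReal_mul (by positivity)]
        congr 2
        rw [mul_assoc]
        congr 1
        have : Real.pi / (Real.pi * r ^ 2 / 2) = 2 * (r⁻¹) ^ 2 := by field_simp
        rw [this, Real.mul_rpow (by positivity) (by positivity), ← Real.rpow_natCast (r⁻¹) 2,
          ← Real.rpow_mul (by positivity), ← Real.rpow_natCast (r⁻¹) d]
        congr 2; push_cast; ring
    _ = _ := by ring

open scoped FourierTransform in
lemma cs_local {d : ℕ} {k : ℤ} {S : Finset (DyadicCube d)} (hS : ∀ Q ∈ S, Q.k = k)
    {f : Euc d → ℂ} (hf : Integrable f) (hsupp : ∀ x, (∀ Q ∈ S, x ∉ Q.set) → f x = 0) {A : ℝ≥0∞}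
    (hA : ∀ Q ∈ S, ∫⁻ y in Q.set, ‖f y‖ₑ ≤ A) {r : ℝ} (hr : r = (2:ℝ) ^ (-k)) (ζ : Euc d) :
    ∫⁻ ξ, ENNReal.ofReal (Real.exp (-(Real.pi / r ^ 2) * ‖ξ - ζ‖ ^ 2)) * ‖𝓕 f ξ‖ₑ ^ 2 ≤
      ENNReal.ofReal (r ^ d) * ENNReal.ofReal (Real.exp (Real.pi * d) * 2 ^ ((d : ℝ) / 2)) *
       (S.card * A ^ 2) := by
  have hr0 : 0 < r := by rw [hr]; positivity
  have hp := Real.pi_pos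
  refine (cs_gauss hf (by positivity) ζ).trans ?_
  have e1 : ∀ x y : Euc d, ENNReal.ofReal ((Real.pi / (Real.pi / r ^ 2)) ^ ((d : ℝ) / 2) *
      Real.exp (-Real.pi ^ 2 * ‖x - y‖ ^ 2 / (Real.pi / r ^ 2))) = ENNReal.ofReal (r ^ d) *
      ENNReal.ofReal (Real.exp (-(Real.pi * r ^ 2) * ‖x - y‖ ^ 2)) := by
    intro x y
    rw [← ENNReal.ofReal_mul (by positivity)]
    congr 2
    · have : Real.pi / (Real.pi / r ^ 2) = r ^ 2 := by field_simp
      rw [this, ← Real.rpow_natCast r 2, ← Real.rpow_mul (by positivity), ← Real.rpow_natCast r d]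
      congr 1; push_cast; ring
    · congr 1; field_simp
  simp_rw [e1]
  set D := ENNReal.ofReal (Real.exp (Real.pi * d) * 2 ^ ((d : ℝ) / 2))
  have e2 : ∀ x, ∫⁻ y, ‖f y‖ₑ * (ENNReal.ofReal (r ^ d) *
      ENNReal.ofReal (Real.exp (-(Real.pi * r ^ 2) * ‖x - y‖ ^ 2))) ≤ ENNReal.ofReal (r ^ d) * (A * D) := by
    intro x
    simp_rw [mul_left_comm _ (ENNReal.ofReal (r ^ d))]
    rw [lintegral_const_mul' _ _ ENNReal.ofReal_ne_top]
    gcongr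
    exact cs_conv_bound hS hsupp hA hr x
  calc _ ≤ ∫⁻ x, ‖f x‖ₑ * (ENNReal.ofReal (r ^ d) * (A * D)) := by
        refine lintegral_mono fun x => ?_
        gcongr; exact e2 x
    _ = (∫⁻ x, ‖f x‖ₑ) * (ENNReal.ofReal (r ^ d) * (A * D)) := by
        rw [lintegral_mul_const'' _ hf.aestronglyMeasurable.enorm]
    _ ≤ (S.card * A) * (ENNReal.ofReal (r ^ d) * (A * D)) := by
        gcongr
        rw [cs_sum_cubes hS _ (fun y hy => by rw [hsupp y hy]; simp)]
        calc _ ≤ ∑ Q ∈ S, A := Finset.sum_le_sum hA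
          _ = _ := by simp
    _ = _ := by ring

open scoped Pointwise in
lemma cs_vol_sub {d : ℕ} (hd : 1 ≤ d) {p : Euc d → ℝ} (hp0 : ∀ x, 0 ≤ p x)
    (hhom : ∀ (t : ℝ) x, 0 ≤ t → p (t • x) = t * p x) {t : ℝ} (ht : 0 ≤ t) :
    volume {x | p x < t} = ENNReal.ofReal (t ^ d) * volume {x | p x < 1} := by
  rcases ht.eq_or_lt with h | h
  · subst h
    have : {x | p x < 0} = ∅ := by
      ext x; simpa using hp0 x
    rw [this, zero_pow (by omega)]; simp
  · have : {x | p x < t} = t • {x | p x < 1} := by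
      ext x
      rw [Set.mem_smul_set_iff_inv_smul_mem₀ h.ne']
      simp only [Set.mem_ofPred_eq]
      rw [hhom _ _ (by positivity), inv_mul_lt_iff₀ h, mul_one]
    rw [this, Measure.addHaar_smul]
    simp [abs_of_pos h]

lemma cs_vol_annulus {d : ℕ} (hd : 1 ≤ d) {p : Euc d → ℝ} (hp0 : ∀ x, 0 ≤ p x)
    (hhom : ∀ (t : ℝ) x, 0 ≤ t → p (t • x) = t * p x) (hc : Continuous p)
    (hV : volume {x | p x < 1} ≠ ⊤) {K : ℝ} (hK : 0 ≤ K) :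
    ∃ C : ℝ, 0 < C ∧ ∀ r : ℝ, 0 < r → r ≤ 1 →
      volume {x | 1 - (2 + K) * r ≤ p x ∧ p x < 1 + (1 + K) * r} ≤ ENNReal.ofReal (C * r) := by
  set V := (volume {x | p x < 1}).toReal with hVd
  refine ⟨(3 + 2 * K) * d * (2 + K) ^ (d - 1) * V + 1, by positivity, fun r hr hr1 => ?_⟩
  set b := 1 + (1 + K) * r with hb
  set a := max 0 (1 - (2 + K) * r) with ha
  have ha0 : 0 ≤ a := le_max_left _ _
  have hab : a ≤ b := by
    apply max_le <;> rw [hb] <;> nlinarith [mul_nonneg hK hr.le]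
  have hsub : {x | 1 - (2 + K) * r ≤ p x ∧ p x < b} ⊆ {x | p x < b} \ {x | p x < a} := by
    rintro x ⟨h1, h2⟩
    refine ⟨h2, ?_⟩
    simp only [Set.mem_ofPred_eq, not_lt]
    exact max_le (hp0 x) h1
  have hm : MeasurableSet {x | p x < a} := (isOpen_lt hc continuous_const).measurableSet
  refine (measure_mono hsub).trans ?_
  have hVe : volume {x | p x < 1} = ENNReal.ofReal V := (ENNReal.ofReal_toReal hV).symm
  have hss : {x | p x < a} ⊆ {x | p x < b} := fun x hx => lt_of_lt_of_le hx hab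
  rw [measure_sdiff hss hm.nullMeasurableSet,
    cs_vol_sub hd hp0 hhom ha0, cs_vol_sub hd hp0 hhom (ha0.trans hab), hVe,
    ← ENNReal.ofReal_mul (by positivity), ← ENNReal.ofReal_mul (by positivity),
    ← ENNReal.ofReal_sub _ (by positivity)]
  · apply ENNReal.ofReal_le_ofReal
    have hV0 : 0 ≤ V := ENNReal.toReal_nonneg
    have hpw : b ^ d - a ^ d ≤ (b - a) * d * b ^ (d - 1) := by
      have := abs_pow_sub_pow_le b a d
      rw [abs_of_nonneg (by linarith : 0 ≤ b - a), abs_of_nonneg (ha0.trans hab), abs_of_nonneg ha0,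
        max_eq_left hab] at this
      exact (le_abs_self _).trans this
    have h1 : b - a ≤ (3 + 2 * K) * r := by
      have := le_max_right 0 (1 - (2 + K) * r)
      rw [← ha] at this
      rw [hb]; linarith
    have h2 : b ≤ 2 + K := by rw [hb]; nlinarith
    have hb0 : 0 ≤ b := ha0.trans hab
    calc b ^ d * V - a ^ d * V = (b ^ d - a ^ d) * V := by ring
      _ ≤ ((b - a) * d * b ^ (d - 1)) * V := by gcongr
      _ ≤ (((3 + 2 * K) * r) * d * (2 + K) ^ (d - 1)) * V := by gcongr
      _ ≤ _ := by nlinarith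
  · rw [cs_vol_sub hd hp0 hhom ha0]
    exact ENNReal.mul_ne_top ENNReal.ofReal_ne_top hV

open scoped FourierTransform in
lemma cs_annulus {d : ℕ} (hd : 1 ≤ d) {p : Euc d → ℝ} (hp0 : ∀ x, 0 ≤ p x)
    (hhom : ∀ (t : ℝ) x, 0 ≤ t → p (t • x) = t * p x) {K : ℝ≥0} (hLip : LipschitzWith K p)
    (hV : volume {x | p x < 1} ≠ ⊤) :
    ∃ C : ℝ, 0 < C ∧ ∀ (k : ℤ), 0 ≤ k → ∀ S : Finset (DyadicCube d), (∀ Q ∈ S, Q.k = k) →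
      ∀ f : Euc d → ℂ, Integrable f → (∀ x, (∀ Q ∈ S, x ∉ Q.set) → f x = 0) →
      ∀ A : ℝ≥0∞, (∀ Q ∈ S, ∫⁻ y in Q.set, ‖f y‖ₑ ≤ A) →
      ∫⁻ ξ in {ξ | 0 < 1 - p ξ ∧ 1 - p ξ < 2 * (2:ℝ) ^ (-k)}, ‖𝓕 f ξ‖ₑ ^ 2 ≤
        ENNReal.ofReal (C * (2:ℝ) ^ (-k)) * (S.card * A ^ 2) := by
  have hc := hLip.continuous
  obtain ⟨C₁, hC₁, hvol⟩ := cs_vol_annulus hd hp0 hhom hc hV K.2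
  set v := (volume (Metric.ball (0 : Euc d) 1)).toReal with hv
  have hv0 : 0 < v := ENNReal.toReal_pos (Metric.measure_ball_pos _ _ one_pos).ne' measure_ball_lt_top.ne
  set D := Real.exp (Real.pi * d) * 2 ^ ((d : ℝ) / 2) with hD
  have hD0 : 0 < D := by positivity
  refine ⟨C₁ * D * Real.exp Real.pi / v, by positivity, ?_⟩
  intro k hk S hS f hf hsupp A hA
  set r : ℝ := (2:ℝ) ^ (-k) with hr
  have hr0 : 0 < r := by positivity
  have hr1 : r ≤ 1 := by
    rw [hr]; exact zpow_le_one_of_nonpos₀ (by norm_num) (by omega)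
  set T : Set (Euc d) := {ξ | 0 < 1 - p ξ ∧ 1 - p ξ < 2 * r}
  set T' : Set (Euc d) := {x | 1 - (2 + K) * r ≤ p x ∧ p x < 1 + (1 + K) * r}
  have hT : MeasurableSet T := by
    have h1 : IsOpen {ξ | 0 < 1 - p ξ} := isOpen_lt continuous_const (continuous_const.sub hc)
    have h2 : IsOpen {ξ | 1 - p ξ < 2 * r} := isOpen_lt (continuous_const.sub hc) continuous_const
    exact h1.measurableSet.inter h2.measurableSet
  set g : Euc d → Euc d → ℝ≥0∞ := fun ξ ζ => ENNReal.ofReal (Real.exp (-(Real.pi / r ^ 2) * ‖ξ - ζ‖ ^ 2)) with hg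
  set c0 : ℝ≥0∞ := ENNReal.ofReal (Real.exp (-Real.pi) * (r ^ d * v)) with hc0
  have hlow : ∀ ξ ∈ T, c0 ≤ ∫⁻ ζ in T', g ξ ζ := by
    intro ξ hξ
    have hsub : Metric.ball ξ r ⊆ T' := by
      intro ζ hζ
      have h1 := hLip.dist_le_mul ζ ξ
      rw [Real.dist_eq] at h1
      have h2 : (K : ℝ) * dist ζ ξ ≤ K * r := by gcongr; exact (Metric.mem_ball.1 hζ).le
      have h3 := abs_le.1 (h1.trans h2)
      have h4 := hξ.1
      have h5 := hξ.2
      constructor <;> nlinarith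
    calc c0 = ∫⁻ ζ in Metric.ball ξ r, ENNReal.ofReal (Real.exp (-Real.pi)) := by
          rw [setLIntegral_const, Measure.addHaar_ball_of_pos _ _ hr0, hc0, ENNReal.ofReal_mul (by positivity),
            ENNReal.ofReal_mul (by positivity), hv, ENNReal.ofReal_toReal measure_ball_lt_top.ne]
          simp
      _ ≤ ∫⁻ ζ in Metric.ball ξ r, g ξ ζ := by
          refine setLIntegral_mono' Metric.isOpen_ball.measurableSet fun ζ hζ => ?_
          apply ENNReal.ofReal_le_ofReal
          apply Real.exp_le_exp.2
          have h1 : ‖ξ - ζ‖ ≤ r := by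
            rw [← dist_eq_norm, dist_comm]; exact (Metric.mem_ball.1 hζ).le
          have h2 : ‖ξ - ζ‖ ^ 2 ≤ r ^ 2 := by gcongr
          have h3 : Real.pi / r ^ 2 * ‖ξ - ζ‖ ^ 2 ≤ Real.pi / r ^ 2 * r ^ 2 := by
            gcongr
          have h4 : Real.pi / r ^ 2 * r ^ 2 = Real.pi := by field_simp
          linarith
      _ ≤ _ := lintegral_mono_set hsub
  have hFm : Measurable (fun ξ => ‖𝓕 f ξ‖ₑ ^ 2) := ((cs_fourier_cont hf).measurable.enorm).pow_const 2
  have hgm : Measurable (Function.uncurry g) := by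
    simp only [hg, Function.uncurry_def]; fun_prop
  have hgm1 : ∀ ξ, Measurable (g ξ) := fun ξ => by simp only [hg]; fun_prop
  have main : c0 * ∫⁻ ξ in T, ‖𝓕 f ξ‖ₑ ^ 2 ≤
      ENNReal.ofReal (C₁ * r) * (ENNReal.ofReal (r ^ d) * ENNReal.ofReal D * (S.card * A ^ 2)) := by
    calc c0 * ∫⁻ ξ in T, ‖𝓕 f ξ‖ₑ ^ 2 = ∫⁻ ξ in T, c0 * ‖𝓕 f ξ‖ₑ ^ 2 := by
          rw [lintegral_const_mul _ hFm]
      _ ≤ ∫⁻ ξ in T, ∫⁻ ζ in T', g ξ ζ * ‖𝓕 f ξ‖ₑ ^ 2 := by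
          refine setLIntegral_mono' hT fun ξ hξ => ?_
          rw [lintegral_mul_const _ (hgm1 ξ)]
          gcongr; exact hlow ξ hξ
      _ ≤ ∫⁻ ξ, ∫⁻ ζ in T', g ξ ζ * ‖𝓕 f ξ‖ₑ ^ 2 := setLIntegral_le_lintegral _ _
      _ = ∫⁻ ζ in T', ∫⁻ ξ, g ξ ζ * ‖𝓕 f ξ‖ₑ ^ 2 := by
          rw [lintegral_lintegral_swap]
          exact (hgm.mul (hFm.comp measurable_fst)).aemeasurable
      _ ≤ ∫⁻ ζ in T', (ENNReal.ofReal (r ^ d) * ENNReal.ofReal D * (S.card * A ^ 2)) :=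
          lintegral_mono fun ζ => cs_local hS hf hsupp hA hr ζ
      _ = volume T' * (ENNReal.ofReal (r ^ d) * ENNReal.ofReal D * (S.card * A ^ 2)) := by
          rw [setLIntegral_const, mul_comm]
      _ ≤ _ := by gcongr; exact hvol r hr0 hr1
  have hc00 : c0 ≠ 0 := by
    rw [hc0]; simp only [ne_eq, ENNReal.ofReal_eq_zero, not_le]; positivity
  rw [← ENNReal.mul_le_mul_iff_right hc00 ENNReal.ofReal_ne_top]
  refine main.trans (le_of_eq ?_)
  have e1 : ENNReal.ofReal (C₁ * r) * (ENNReal.ofReal (r ^ d) * ENNReal.ofReal D) =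
      c0 * ENNReal.ofReal (C₁ * D * Real.exp Real.pi / v * r) := by
    rw [hc0, ← ENNReal.ofReal_mul (by positivity), ← ENNReal.ofReal_mul (by positivity),
      ← ENNReal.ofReal_mul (by positivity)]
    congr 1
    rw [Real.exp_neg]
    field_simp
  rw [← mul_assoc c0, ← e1]
  ring

open scoped FourierTransform in
lemma cs_invFT {d : ℕ} (m : Euc d → ℂ) (x : Euc d) :
    invFTd m x = 𝓕⁻ (fun η : Euc d => m ((2 * Real.pi) • η)) x := by
  rw [invFTd, Real.fourierInv_eq']
  have h := Measure.integral_comp_smul (volume : Measure (Euc d))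
    (fun ξ => m ξ * Complex.exp (Complex.I * (⟪x, ξ⟫ : ℂ))) (2 * Real.pi)
  rw [finrank_euclideanSpace_fin, abs_of_pos (by positivity)] at h
  rw [← h]
  congr 1
  ext η
  rw [smul_eq_mul, mul_comm]
  congr 2
  rw [← real_inner_comm η x, inner_smul_right]
  push_cast
  ring

open scoped FourierTransform in
lemma cs_mod {d : ℕ} (u : Euc d → ℂ) (x y : Euc d) :
    𝓕 (fun η => u η * Complex.exp ((2 * Real.pi * ⟪η, x⟫ : ℝ) * Complex.I)) y = 𝓕⁻ u (x - y) := by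
  rw [Real.fourier_eq', Real.fourierInv_eq']
  congr 1
  ext η
  simp only [smul_eq_mul]
  rw [mul_comm (u η), ← mul_assoc, ← Complex.exp_add, inner_sub_right]
  congr 2
  push_cast
  ring

open scoped FourierTransform in
lemma cs_mulOp {d : ℕ} (m : Euc d → ℂ) {f : Euc d → ℂ} (hf : Integrable f)
    (hm : Integrable (fun η : Euc d => m ((2 * Real.pi) • η))) (x : Euc d) :
    mulOp m f x = 𝓕⁻ (fun η : Euc d => m ((2 * Real.pi) • η) * 𝓕 f η) x := by
  set u : Euc d → ℂ := fun η : Euc d => m ((2 * Real.pi) • η) with hu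
  have hh : Integrable (fun η => u η * Complex.exp ((2 * Real.pi * ⟪η, x⟫ : ℝ) * Complex.I)) := by
    refine hm.mul_bdd (c := 1) ?_ (ae_of_all _ fun η => (Complex.norm_exp_ofReal_mul_I _).le)
    exact Continuous.aestronglyMeasurable (by fun_prop)
  have := cs_selfadj hh hf
  simp only [cs_mod] at this
  rw [mulOp]
  simp only [cs_invFT]
  rw [this, Real.fourierInv_eq']
  congr 1
  ext η
  simp only [smul_eq_mul]
  ring

open scoped FourierTransform in
lemma cs_plancherel_inv {d : ℕ} {g : Euc d → ℂ} (hg : Integrable g) :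
    ∫⁻ x, ‖𝓕⁻ g x‖ₑ ^ 2 ≤ 2 * ∫⁻ x, ‖g x‖ₑ ^ 2 := by
  refine le_trans (le_of_eq ?_) (cs_plancherel hg)
  simp_rw [Real.fourierInv_eq_fourier_neg]
  exact lintegral_neg_eq_self (fun x => ‖𝓕 g x‖ₑ ^ 2)

lemma cs_entire {d : ℕ} {w : Euc d → ℂ} (hw : Integrable w) {a : Euc d → ℝ} (ha : Continuous a)
    {B : ℝ} (hB0 : 0 ≤ B) (hB : ∀ η, w η ≠ 0 → |a η| ≤ B) :
    Differentiable ℂ (fun z : ℂ => ∫ η, w η * Complex.exp (z * (Complex.I * (a η : ℂ)))) := by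
  intro z₀
  have hbd : ∀ η, ∀ z : ℂ, ‖z‖ ≤ ‖z₀‖ + 1 → ‖w η * Complex.exp (z * (Complex.I * (a η : ℂ)))‖ ≤
      ‖w η‖ * Real.exp ((‖z₀‖ + 1) * B) := by
    intro η z hz
    by_cases h : w η = 0
    · simp [h]
    rw [norm_mul]
    gcongr
    rw [Complex.norm_exp]
    apply Real.exp_le_exp.2
    refine (Complex.re_le_norm _).trans ?_
    rw [norm_mul, norm_mul, Complex.norm_I, one_mul, Complex.norm_real, Real.norm_eq_abs]
    gcongr
    exact hB η h
  have hmeas : ∀ z : ℂ, AEStronglyMeasurable (fun η => w η * Complex.exp (z * (Complex.I * (a η : ℂ)))) volume := by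
    intro z
    exact hw.aestronglyMeasurable.mul (Continuous.aestronglyMeasurable (by fun_prop))
  have := hasDerivAt_integral_of_dominated_loc_of_deriv_le (μ := (volume : Measure (Euc d))) (𝕜 := ℂ)
    (F := fun z η => w η * Complex.exp (z * (Complex.I * (a η : ℂ))))
    (F' := fun z η => w η * Complex.exp (z * (Complex.I * (a η : ℂ))) * (Complex.I * (a η : ℂ)))
    (x₀ := z₀) (bound := fun η => ‖w η‖ * Real.exp ((‖z₀‖ + 1) * B) * B)
    (Metric.ball_mem_nhds z₀ one_pos) (Eventually.of_forall hmeas) ?_ ?_ ?_ ?_ ?_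
  · exact this.2.differentiableAt
  · refine Integrable.mono' (hw.norm.mul_const (Real.exp ((‖z₀‖ + 1) * B))) (hmeas z₀)
      (ae_of_all _ fun η => hbd η z₀ (by linarith))
  · exact (hmeas z₀).mul (Continuous.aestronglyMeasurable (by fun_prop))
  · refine ae_of_all _ fun η z hz => ?_
    by_cases h : w η = 0
    · simp [h]
    have hz' : ‖z‖ ≤ ‖z₀‖ + 1 := by
      have h1 : ‖z - z₀‖ < 1 := by simpa [dist_eq_norm] using hz
      have h2 := norm_le_norm_add_norm_sub' z z₀
      linarith
    rw [norm_mul]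
    refine mul_le_mul (hbd η z hz') ?_ (norm_nonneg _) (by positivity)
    rw [norm_mul, Complex.norm_I, one_mul, Complex.norm_real, Real.norm_eq_abs]
    exact hB η h
  · exact (hw.norm.mul_const _).mul_const _
  · refine ae_of_all _ fun η z hz => ?_
    have h1 : HasDerivAt (fun z : ℂ => z * (Complex.I * (a η : ℂ))) (1 * (Complex.I * (a η : ℂ))) z :=
      (hasDerivAt_id z).mul_const _
    have h2 := h1.cexp.const_mul (w η)
    simp only [one_mul, ← mul_assoc] at h2 ⊢
    exact h2

lemma cs_analytic_ae {Φ : ℂ → ℂ} (h : Differentiable ℂ Φ) (h0 : Φ 0 ≠ 0) :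
    ∀ᵐ t : ℝ, Φ (t : ℂ) ≠ 0 := by
  have han : AnalyticOnNhd ℝ (fun t : ℝ => Φ (t : ℂ)) Set.univ := by
    intro t _
    have h1 : AnalyticAt ℝ Φ (t : ℂ) := (h.analyticAt (t : ℂ)).restrictScalars
    exact h1.comp (Complex.ofRealCLM.analyticAt t)
  have hc := han.preimage_zero_mem_codiscrete (x := 0) (by simpa using h0)
  have := ae_restrict_le_codiscreteWithin (μ := (volume : Measure ℝ)) MeasurableSet.univ hc
  rw [Measure.restrict_univ] at this
  filter_upwards [this] with t ht
  exact ht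

open scoped FourierTransform in
lemma cs_kernel {d : ℕ} {u : Euc d → ℂ} (hu : Integrable u) {R : ℝ} (hR0 : 0 ≤ R)
    (hR : ∀ η, u η ≠ 0 → ‖η‖ ≤ R) :
    (∀ x, 𝓕⁻ u x = 0) ∨ ∀ᵐ x, 𝓕⁻ u x ≠ 0 := by
  by_cases hz : ∀ x, 𝓕⁻ u x = 0
  · exact Or.inl hz
  right
  push Not at hz
  obtain ⟨x₀, hx₀⟩ := hz
  have hcont : Continuous (𝓕⁻ u) := by
    have : 𝓕⁻ u = fun x => 𝓕 u (-x) := by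
      ext x; exact Real.fourierInv_eq_fourier_neg _ _
    rw [this]; exact (cs_fourier_cont hu).comp continuous_neg
  have hline : ∀ v : Euc d, ∀ᵐ t : ℝ, 𝓕⁻ u (x₀ + t • v) ≠ 0 := by
    intro v
    set w : Euc d → ℂ := fun η => u η * Complex.exp ((2 * Real.pi * ⟪η, x₀⟫ : ℝ) * Complex.I) with hw
    have hwi : Integrable w := by
      refine hu.mul_bdd (c := 1) ?_ (ae_of_all _ fun η => (Complex.norm_exp_ofReal_mul_I _).le)
      exact Continuous.aestronglyMeasurable (by fun_prop)
    have hd := cs_entire (a := fun η => 2 * Real.pi * ⟪η, v⟫) hwi (by fun_prop)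
      (B := 2 * Real.pi * (R * ‖v‖)) (by positivity) (by
        intro η hη
        have : u η ≠ 0 := fun h => hη (by simp [hw, h])
        rw [abs_mul, abs_of_pos (by positivity : 0 < 2 * Real.pi)]
        gcongr
        refine (abs_real_inner_le_norm _ _).trans ?_
        gcongr
        exact hR η this)
    have heq : ∀ t : ℝ, 𝓕⁻ u (x₀ + t • v) =
        ∫ η, w η * Complex.exp ((t : ℂ) * (Complex.I * ((2 * Real.pi * ⟪η, v⟫ : ℝ) : ℂ))) := by
      intro t
      rw [Real.fourierInv_eq']
      congr 1
      ext η
      rw [hw]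
      simp only [smul_eq_mul]
      rw [mul_comm (u η), mul_right_comm (Complex.exp _), ← Complex.exp_add, inner_add_right, inner_smul_right]
      congr 2
      push_cast
      ring
    have := cs_analytic_ae hd (by
      have h0 := heq 0
      rw [zero_smul, add_zero] at h0
      rw [Complex.ofReal_zero] at h0
      rw [← h0]; exact hx₀)
    filter_upwards [this] with t ht
    rw [heq]; exact ht
  have hmeas : MeasurableSet {q : Euc d × ℝ | 𝓕⁻ u (x₀ + q.2 • q.1) ≠ 0} := by
    have : Continuous (fun q : Euc d × ℝ => 𝓕⁻ u (x₀ + q.2 • q.1)) := hcont.comp (by fun_prop)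
    exact (isOpen_ne_fun this continuous_const).measurableSet
  have hsw := (Measure.ae_ae_comm (μ := (volume : Measure (Euc d))) (ν := (volume : Measure ℝ))
    (p := fun v t => 𝓕⁻ u (x₀ + t • v) ≠ 0) hmeas).1 (ae_of_all _ hline)
  have hne : ∀ᵐ t : ℝ, t ≠ 0 := Measure.ae_ne volume 0
  obtain ⟨t, ht, ht0⟩ := (hsw.and hne).exists
  have hq1 := Measure.quasiMeasurePreserving_smul (volume : Measure (Euc d)) (inv_ne_zero ht0)
  have hq2 : ∀ᵐ y : Euc d, 𝓕⁻ u (x₀ + y) ≠ 0 := by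
    filter_upwards [hq1.ae ht] with y hy
    rwa [smul_inv_smul₀ ht0] at hy
  have hq3 := (measurePreserving_sub_right (volume : Measure (Euc d)) x₀).quasiMeasurePreserving.ae hq2
  filter_upwards [hq3] with x hx
  simpa using hx

open scoped FourierTransform in
lemma cs_nonmeas {d : ℕ} (m : Euc d → ℂ) {f : Euc d → ℂ}
    (hf : ¬ AEStronglyMeasurable f (volume : Measure (Euc d)))
    (hm : Integrable (fun η : Euc d => m ((2 * Real.pi) • η))) {R : ℝ} (hR0 : 0 ≤ R)
    (hR : ∀ η, m ((2 * Real.pi) • η) ≠ 0 → ‖η‖ ≤ R) (x : Euc d) : mulOp m f x = 0 := by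
  rw [mulOp]
  simp only [cs_invFT]
  set u : Euc d → ℂ := fun η : Euc d => m ((2 * Real.pi) • η) with hu
  have hcont : Continuous (𝓕⁻ u) := by
    have : 𝓕⁻ u = fun x => 𝓕 u (-x) := by
      ext x; exact Real.fourierInv_eq_fourier_neg _ _
    rw [this]; exact (cs_fourier_cont hm).comp continuous_neg
  rcases cs_kernel hm hR0 hR with h | h
  · simp [h]
  · apply integral_non_aestronglyMeasurable
    intro hcon
    apply hf
    have hae := (quasiMeasurePreserving_sub_left (volume : Measure (Euc d)) x).ae h
    have hmi : AEStronglyMeasurable (fun y => (𝓕⁻ u (x - y))⁻¹) (volume : Measure (Euc d)) :=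
      (hcont.measurable.comp (by fun_prop : Measurable fun y : Euc d => x - y)).inv.aestronglyMeasurable
    refine (hmi.mul hcon).congr ?_
    filter_upwards [hae] with y hy
    simp only [Pi.mul_apply]
    rw [inv_mul_cancel_left₀ hy]

lemma cs_chi {χ : ℝ → ℂ} (h : MemYM 1 χ) :
    Continuous χ ∧ (∀ s, ‖χ s‖ ≤ 1) ∧ ∀ s, χ s ≠ 0 → 1 / 2 < s ∧ s < 2 := by
  obtain ⟨h1, h2, h3⟩ := h
  have hc : Continuous χ := h1.continuous
  have hs : ∀ s, χ s ≠ 0 → 1 / 2 < s ∧ s < 2 := fun s hs => h2 hs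
  refine ⟨hc, fun s => ?_, hs⟩
  have hcs : HasCompactSupport χ := by
    refine HasCompactSupport.intro (isCompact_Icc (a := (1/2 : ℝ)) (b := 2)) fun x hx => ?_
    by_contra hne
    exact hx ⟨(hs x hne).1.le, (hs x hne).2.le⟩
  obtain ⟨B, hB⟩ := hc.bounded_above_of_compact_support hcs
  have h0 : ‖χ s‖ ≤ ⨆ s : ℝ, ‖iteratedDeriv 0 χ s‖ := by
    simp only [iteratedDeriv_zero]
    exact le_ciSup (f := fun s => ‖χ s‖) ⟨B, by rintro _ ⟨x, rfl⟩; exact hB x⟩ s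
  have hn : 0 ≤ ⨆ s : ℝ, ‖iteratedDeriv 1 χ s‖ := Real.iSup_nonneg fun _ => norm_nonneg _
  rw [Finset.sum_range_succ, Finset.sum_range_one] at h3
  linarith

lemma cs_card_two {I : Finset ℤ} {a : ℤ → ℂ} {s : ℤ} {δ : ℝ}
    (h : ∀ k ∈ I, a k ≠ 0 → 1 / 2 < (2:ℝ) ^ (k + s) * δ ∧ (2:ℝ) ^ (k + s) * δ < 2) :
    ‖∑ k ∈ I, a k‖ₑ ^ 2 ≤ 2 * ∑ k ∈ I, ‖a k‖ₑ ^ 2 := by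
  set J := I.filter (fun k => a k ≠ 0) with hJ
  have hsum : ∑ k ∈ I, a k = ∑ k ∈ J, a k := (Finset.sum_filter_ne_zero I).symm
  have hcard : J.card ≤ 2 := by
    rcases J.eq_empty_or_nonempty with he | hne
    · simp [he]
    · set k₀ := J.min' hne with hk₀
      have hsub : J ⊆ {k₀, k₀ + 1} := by
        intro k hk
        have hle : k₀ ≤ k := J.min'_le k hk
        by_contra hcon
        have hk2 : k₀ + 2 ≤ k := by
          simp only [Finset.mem_insert, Finset.mem_singleton, not_or] at hcon
          omega
        have hm0 := Finset.mem_filter.1 (J.min'_mem hne)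
        replace hk := Finset.mem_filter.1 hk
        have a1 := (h _ hm0.1 hm0.2).1
        have a2 := (h _ hk.1 hk.2).2
        rw [← hk₀] at a1
        have hδ : 0 < δ := by
          by_contra hd
          have : (2:ℝ) ^ (k₀ + s) * δ ≤ 0 := mul_nonpos_of_nonneg_of_nonpos (by positivity) (by linarith)
          linarith
        have e : (2:ℝ) ^ (k₀ + s + 2) ≤ (2:ℝ) ^ (k + s) := by
          apply zpow_le_zpow_right₀ (by norm_num); omega
        rw [zpow_add₀ (by norm_num)] at e
        have e' := mul_le_mul_of_nonneg_right e hδ.le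
        norm_num at e'
        nlinarith
      exact (Finset.card_le_card hsub).trans Finset.card_le_two
  rw [hsum]
  have hreal : ‖∑ k ∈ J, a k‖ ^ 2 ≤ 2 * ∑ k ∈ J, ‖a k‖ ^ 2 := by
    calc ‖∑ k ∈ J, a k‖ ^ 2 ≤ (∑ k ∈ J, ‖a k‖) ^ 2 := by gcongr; exact norm_sum_le _ _
      _ ≤ J.card * ∑ k ∈ J, ‖a k‖ ^ 2 := sq_sum_le_card_mul_sum_sq
      _ ≤ _ := by gcongr; exact_mod_cast hcard
  have h1 : ‖∑ k ∈ J, a k‖ₑ ^ 2 ≤ 2 * ∑ k ∈ J, ‖a k‖ₑ ^ 2 := by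
    have := ENNReal.ofReal_le_ofReal hreal
    rw [ENNReal.ofReal_mul (by norm_num), ENNReal.ofReal_sum_of_nonneg (fun _ _ => by positivity),
      ENNReal.ofReal_pow (norm_nonneg _), ofReal_norm] at this
    simp_rw [ENNReal.ofReal_pow (norm_nonneg _), ofReal_norm] at this
    simpa using this
  refine h1.trans ?_
  gcongr
  exact Finset.filter_subset _ _

lemma cs_setup {d : ℕ} {Ω : Set (Euc d)} {ρ : Euc d → ℝ} (hρ : IsMinkowskiGauge d Ω ρ) :
    ∃ (K : ℝ≥0) (R : ℝ), 0 ≤ R ∧ Continuous ρ ∧ LipschitzWith K (fun η : Euc d => ρ ((2 * Real.pi) • η)) ∧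
      (∀ x, 0 ≤ ρ ((2 * Real.pi) • x)) ∧
      (∀ (t : ℝ) x, 0 ≤ t → ρ ((2 * Real.pi) • (t • x)) = t * ρ ((2 * Real.pi) • x)) ∧
      (∀ η, ρ ((2 * Real.pi) • η) < 1 → ‖η‖ ≤ R) := by
  have hn : Ω ∈ 𝓝 (0 : Euc d) := hρ.isOpen.mem_nhds hρ.zero_mem
  obtain ⟨K, hK⟩ := hρ.convex.lipschitz_gauge hn
  obtain ⟨R, hR⟩ := hρ.isBounded.exists_norm_le
  have hR0 : 0 ≤ R := (norm_nonneg _).trans (hR 0 hρ.zero_mem)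
  have hp := Real.pi_gt_three
  rw [hρ.eq_gauge]
  have hl : LipschitzWith (Real.toNNReal (2 * Real.pi)) (fun η : Euc d => (2 * Real.pi) • η) := by
    refine LipschitzWith.of_dist_le_mul fun x y => ?_
    rw [dist_smul₀, Real.norm_of_nonneg (by positivity), Real.coe_toNNReal _ (by positivity)]
  refine ⟨_, R, hR0, hK.continuous, hK.comp hl, fun x => gauge_nonneg _, fun t x ht => ?_, fun η hη => ?_⟩
  · rw [smul_comm, gauge_smul_of_nonneg ht, smul_eq_mul]
  · have : (2 * Real.pi) • η ∈ {x | gauge Ω x < 1} := hη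
    rw [setOfPred_gauge_lt_one_eq_self_of_isOpen hρ.convex hρ.zero_mem hρ.isOpen] at this
    have h1 := hR _ this
    rw [norm_smul, Real.norm_of_nonneg (by positivity)] at h1
    nlinarith [norm_nonneg η]

open scoped FourierTransform in
lemma cs_fourierInv_sum {d : ℕ} (I : Finset ℤ) (c : ℤ → ℝ) (g : ℤ → Euc d → ℂ)
    (hg : ∀ k ∈ I, Integrable (g k)) (x : Euc d) :
    ∑ k ∈ I, c k • 𝓕⁻ (g k) x = 𝓕⁻ (fun η => ∑ k ∈ I, (c k : ℂ) * g k η) x := by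
  simp only [Real.fourierInv_eq', smul_eq_mul, Finset.mul_sum]
  rw [integral_finsetSum]
  · refine Finset.sum_congr rfl fun k _ => ?_
    rw [← integral_smul]
    congr 1
    ext η
    rw [Complex.real_smul]; ring
  · intro k hk
    refine ((hg k hk).const_mul (c k : ℂ)).bdd_mul (c := 1) ?_
      (ae_of_all _ fun η => (Complex.norm_exp_ofReal_mul_I _).le)
    exact Continuous.aestronglyMeasurable (by fun_prop)

open scoped FourierTransform in
lemma cs_main {d : ℕ} (hd : 1 ≤ d) {Ω : Set (Euc d)} {ρ : Euc d → ℝ} (hρ : IsMinkowskiGauge d Ω ρ) :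
    ∃ C : ℝ, 0 < C ∧ ∀ (s : ℕ) (I : Finset ℤ), (∀ k ∈ I, 0 ≤ k) →
      ∀ X : ℤ → ℝ → ℂ, (∀ k, MemYM 1 (X k)) → ∀ (c : ℤ → ℝ) (S : ℤ → Finset (DyadicCube d)),
      (∀ k ∈ I, ∀ Q ∈ S k, Q.k = k) → ∀ (F : DyadicCube d → Euc d → ℂ) (A : ℝ≥0∞), A ≠ ⊤ →
      (∀ k ∈ I, ∀ Q ∈ S k, ∫⁻ y in Q.set, ‖F Q y‖ₑ ≤ A) →
      ∫⁻ x, ‖∑ k ∈ I, c k • mulOp (fun ξ => X k ((2:ℝ) ^ (k + (s : ℤ)) * (1 - ρ ξ)))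
        (fun y => ∑ Q ∈ S k, Q.set.indicator (F Q) y) x‖ₑ ^ 2 ≤
      ∑ k ∈ I, ENNReal.ofReal (4 * C * (c k) ^ 2 * (2:ℝ) ^ (-k)) * ((S k).card * A ^ 2) := by
  obtain ⟨K, R, hR0, hρc, hLip, hp0, hhom, hR⟩ := cs_setup hρ
  set p : Euc d → ℝ := fun η => ρ ((2 * Real.pi) • η) with hp
  have hV : volume {x | p x < 1} ≠ ⊤ := by
    have hsub : {x | p x < 1} ⊆ Metric.closedBall (0 : Euc d) R := fun x hx => by
      simpa using hR x hx
    exact ((measure_mono hsub).trans_lt measure_closedBall_lt_top).ne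
  obtain ⟨C, hC, hann⟩ := cs_annulus hd hp0 hhom hLip hV
  refine ⟨C, hC, ?_⟩
  intro s I hI X hX c S hS F A hA hFA
  set m : ℤ → Euc d → ℂ := fun k ξ => X k ((2:ℝ) ^ (k + (s : ℤ)) * (1 - ρ ξ)) with hm
  set u : ℤ → Euc d → ℂ := fun k η => m k ((2 * Real.pi) • η) with hu
  set g : ℤ → Euc d → ℂ := fun k y => ∑ Q ∈ S k, Q.set.indicator (F Q) y with hg
  have huc : ∀ k, Continuous (u k) := by
    intro k
    have h1 := (cs_chi (hX k)).1
    have h2 := hLip.continuous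
    exact h1.comp (continuous_const.mul (continuous_const.sub h2))
  have hu1 : ∀ k η, ‖u k η‖ ≤ 1 := fun k η => (cs_chi (hX k)).2.1 _
  have hus : ∀ k η, u k η ≠ 0 → 1 / 2 < (2:ℝ) ^ (k + (s : ℤ)) * (1 - p η) ∧
      (2:ℝ) ^ (k + (s : ℤ)) * (1 - p η) < 2 := fun k η h => (cs_chi (hX k)).2.2 _ h
  have hpos : ∀ k η, u k η ≠ 0 → 0 < 1 - p η := by
    intro k η h
    by_contra hcon
    have : (2:ℝ) ^ (k + (s : ℤ)) * (1 - p η) ≤ 0 :=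
      mul_nonpos_of_nonneg_of_nonpos (by positivity) (by linarith)
    linarith [(hus k η h).1]
  have huR : ∀ k η, u k η ≠ 0 → ‖η‖ ≤ R := fun k η h => hR η (by
    have := hpos k η h
    change p η < 1
    linarith)
  have hui : ∀ k, Integrable (u k) := by
    intro k
    apply (huc k).integrable_of_hasCompactSupport
    refine HasCompactSupport.intro (isCompact_closedBall (0 : Euc d) R) fun η hη => ?_
    by_contra hne
    exact hη (by simpa using huR k η hne)
  classical
  set f : ℤ → Euc d → ℂ := fun k => if AEStronglyMeasurable (g k) (volume : Measure (Euc d)) then g k else 0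
    with hf
  have hgQ : ∀ k ∈ I, ∀ Q ∈ S k, ∀ y ∈ Q.set, g k y = F Q y := by
    intro k hk Q hQ y hy
    simp only [hg]
    rw [Finset.sum_eq_single Q]
    · exact Set.indicator_of_mem hy _
    · intro Q' hQ' hne
      apply Set.indicator_of_notMem
      intro hy'
      exact Set.disjoint_left.1 (cs_cube_disj ((hS k hk Q' hQ').trans (hS k hk Q hQ).symm) hne) hy' hy
    · intro h; exact absurd hQ h
  have hg0 : ∀ k y, (∀ Q ∈ S k, y ∉ Q.set) → g k y = 0 := by
    intro k y h
    simp only [hg]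
    exact Finset.sum_eq_zero fun Q hQ => Set.indicator_of_notMem (h Q hQ) _
  have hfg : ∀ k y, ‖f k y‖ₑ ≤ ‖g k y‖ₑ := by
    intro k y
    simp only [hf]
    split_ifs <;> simp
  have hf0 : ∀ k y, (∀ Q ∈ S k, y ∉ Q.set) → f k y = 0 := by
    intro k y h
    have := hfg k y
    rw [hg0 k y h] at this
    simpa using this
  have hfA : ∀ k ∈ I, ∀ Q ∈ S k, ∫⁻ y in Q.set, ‖f k y‖ₑ ≤ A := by
    intro k hk Q hQ
    refine le_trans ?_ (hFA k hk Q hQ)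
    refine setLIntegral_mono' (cs_cube_meas Q) fun y hy => ?_
    rw [← hgQ k hk Q hQ y hy]
    exact hfg k y
  have hfi : ∀ k ∈ I, Integrable (f k) := by
    intro k hk
    constructor
    · simp only [hf]
      split_ifs with h
      · exact h
      · exact aestronglyMeasurable_zero
    · rw [HasFiniteIntegral, cs_sum_cubes (hS k hk) _ (fun y hy => by rw [hf0 k y hy, enorm_zero])]
      exact (Finset.sum_le_sum (hfA k hk)).trans_lt (by
        simp only [Finset.sum_const, nsmul_eq_mul]
        exact ENNReal.mul_lt_top (by simp) hA.lt_top)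
  have hop : ∀ k ∈ I, ∀ x, mulOp (m k) (g k) x = 𝓕⁻ (fun η => u k η * 𝓕 (f k) η) x := by
    intro k hk x
    rw [← cs_mulOp (m k) (hfi k hk) (hui k) x]
    by_cases h : AEStronglyMeasurable (g k) (volume : Measure (Euc d))
    · simp only [hf, h, if_true]
    · rw [cs_nonmeas (m k) h (hui k) hR0 (huR k) x]
      simp only [hf, h, if_false, mulOp]
      simp
  have hGi : ∀ k ∈ I, Integrable (fun η => u k η * 𝓕 (f k) η) := fun k hk =>
    (hui k).mul_bdd (c := ∫ x, ‖f k x‖) (cs_fourier_cont (hfi k hk)).aestronglyMeasurable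
      (ae_of_all _ fun η => cs_fourier_le (f k) η)
  have hsum : ∀ x, ∑ k ∈ I, c k • mulOp (m k) (g k) x =
      𝓕⁻ (fun η => ∑ k ∈ I, (c k : ℂ) * (u k η * 𝓕 (f k) η)) x := by
    intro x
    rw [← cs_fourierInv_sum I c _ hGi x]
    exact Finset.sum_congr rfl fun k hk => by rw [hop k hk x]
  have hterm : ∀ k ∈ I, ∫⁻ η, ‖(c k : ℂ) * (u k η * 𝓕 (f k) η)‖ₑ ^ 2 ≤
      ENNReal.ofReal ((c k) ^ 2) * (ENNReal.ofReal (C * (2:ℝ) ^ (-k)) * ((S k).card * A ^ 2)) := by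
    intro k hk
    have hT := hann k (hI k hk) (S k) (hS k hk) (f k) (hfi k hk) (hf0 k) A (hfA k hk)
    refine le_trans ?_ (mul_le_mul_right hT _)
    set T : Set (Euc d) := {ξ | 0 < 1 - p ξ ∧ 1 - p ξ < 2 * (2:ℝ) ^ (-k)} with hTd
    have hFm : Measurable (fun ξ => ‖𝓕 (f k) ξ‖ₑ ^ 2) :=
      ((cs_fourier_cont (hfi k hk)).measurable.enorm).pow_const 2
    rw [← lintegral_const_mul _ hFm]
    have hsup : Function.support (fun η => ‖(c k : ℂ) * (u k η * 𝓕 (f k) η)‖ₑ ^ 2) ⊆ T := by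
      intro η hη
      have hne : u k η ≠ 0 := fun h => hη (by simp [h])
      refine ⟨hpos k η hne, ?_⟩
      have h2 := (hus k η hne).2
      have h3 := hpos k η hne
      have e : (2:ℝ) ^ k ≤ (2:ℝ) ^ (k + (s : ℤ)) := by
        apply zpow_le_zpow_right₀ (by norm_num); omega
      have e2 : (2:ℝ) ^ k * (1 - p η) < 2 := (mul_le_mul_of_nonneg_right e h3.le).trans_lt h2
      rw [zpow_neg, ← div_eq_mul_inv, lt_div_iff₀ (by positivity)]
      linarith
    rw [← setLIntegral_eq_of_support_subset hsup]
    refine lintegral_mono fun η => ?_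
    have h1 : ‖u k η‖ₑ ≤ 1 := by
      rw [← ofReal_norm]; exact ENNReal.ofReal_le_one.2 (hu1 k η)
    have h2 : ‖(c k : ℂ)‖ₑ ^ 2 = ENNReal.ofReal ((c k) ^ 2) := by
      rw [← ofReal_norm, ← ENNReal.ofReal_pow (norm_nonneg _), Complex.norm_real, Real.norm_eq_abs, sq_abs]
    calc ‖(c k : ℂ) * (u k η * 𝓕 (f k) η)‖ₑ ^ 2 = ‖(c k : ℂ)‖ₑ ^ 2 * (‖u k η‖ₑ * ‖𝓕 (f k) η‖ₑ) ^ 2 := by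
          rw [enorm_mul, enorm_mul, mul_pow]
      _ ≤ ‖(c k : ℂ)‖ₑ ^ 2 * (1 * ‖𝓕 (f k) η‖ₑ) ^ 2 := by gcongr
      _ = _ := by rw [one_mul, h2]
  calc ∫⁻ x, ‖∑ k ∈ I, c k • mulOp (m k) (g k) x‖ₑ ^ 2
      = ∫⁻ x, ‖𝓕⁻ (fun η => ∑ k ∈ I, (c k : ℂ) * (u k η * 𝓕 (f k) η)) x‖ₑ ^ 2 := by
        simp_rw [hsum]
    _ ≤ 2 * ∫⁻ η, ‖∑ k ∈ I, (c k : ℂ) * (u k η * 𝓕 (f k) η)‖ₑ ^ 2 :=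
        cs_plancherel_inv (integrable_finsetSum _ fun k hk => (hGi k hk).const_mul _)
    _ ≤ 2 * ∫⁻ η, 2 * ∑ k ∈ I, ‖(c k : ℂ) * (u k η * 𝓕 (f k) η)‖ₑ ^ 2 := by
        refine mul_le_mul_right (lintegral_mono fun η => ?_) _
        exact cs_card_two (s := (s : ℤ)) (δ := 1 - p η) fun k hk hne =>
          hus k η (fun h => hne (by simp [h]))
    _ = 4 * ∑ k ∈ I, ∫⁻ η, ‖(c k : ℂ) * (u k η * 𝓕 (f k) η)‖ₑ ^ 2 := by
        have hmm : ∀ k ∈ I, Measurable (fun η => ‖(c k : ℂ) * (u k η * 𝓕 (f k) η)‖ₑ ^ 2) := by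
          intro k hk
          have h1 := cs_fourier_cont (hfi k hk)
          have h2 := huc k
          exact ((continuous_const.mul (h2.mul h1)).measurable.enorm).pow_const 2
        rw [lintegral_const_mul _ (Finset.measurable_fun_sum _ hmm), lintegral_finsetSum _ hmm, ← mul_assoc]
        norm_num
    _ ≤ 4 * ∑ k ∈ I, ENNReal.ofReal ((c k) ^ 2) * (ENNReal.ofReal (C * (2:ℝ) ^ (-k)) * ((S k).card * A ^ 2)) := by
        exact mul_le_mul_right (Finset.sum_le_sum hterm) _
    _ = _ := by
        rw [Finset.mul_sum]
        refine Finset.sum_congr rfl fun k _ => ?_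
        rw [← mul_assoc, ← mul_assoc]
        congr 1
        rw [show (4 : ℝ≥0∞) = ENNReal.ofReal 4 by simp, ← ENNReal.ofReal_mul (by norm_num),
          ← ENNReal.ofReal_mul (by positivity)]
        congr 1
        ring

lemma cs_eLp {d : ℕ} (g : Euc d → ℂ) (a : ℝ) (ha : 0 ≤ a) (μ A : ℝ≥0∞)
    (h : ∫⁻ x, ‖g x‖ₑ ^ 2 ≤ ENNReal.ofReal (a ^ 2) * μ * A ^ 2) :
    eLpNorm g 2 volume ≤ ENNReal.ofReal a * μ ^ ((1 : ℝ) / 2) * A := by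
  rw [eLpNorm_eq_lintegral_rpow_enorm_toReal (by norm_num) (by norm_num)]
  simp only [ENNReal.toReal_ofNat]
  have e : ∫⁻ x, ‖g x‖ₑ ^ (2:ℝ) = ∫⁻ x, ‖g x‖ₑ ^ 2 := by
    simp_rw [← ENNReal.rpow_natCast]; norm_num
  rw [e]
  refine (ENNReal.rpow_le_rpow h (by norm_num)).trans (le_of_eq ?_)
  rw [ENNReal.mul_rpow_of_nonneg _ _ (by norm_num), ENNReal.mul_rpow_of_nonneg _ _ (by norm_num),
    ENNReal.ofReal_pow ha, ← ENNReal.rpow_natCast, ← ENNReal.rpow_natCast, ← ENNReal.rpow_mul,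
    ← ENNReal.rpow_mul]
  norm_num

lemma cs_top {d : ℕ} {𝔔 : Finset (DyadicCube d)} {F : DyadicCube d → Euc d → ℂ}
    (h : supLp 1 𝔔 F = ⊤) {a : ℝ} (ha : 0 < a) :
    ENNReal.ofReal a * dyadicMeasure 𝔔 ^ ((1 : ℝ) / 2) * supLp 1 𝔔 F = ⊤ := by
  have hne : 𝔔.Nonempty := by
    by_contra hcon
    rw [Finset.not_nonempty_iff_eq_empty] at hcon
    subst hcon
    simp [supLp] at h
  obtain ⟨Q, hQ⟩ := hne
  have hμ : dyadicMeasure 𝔔 ≠ 0 := by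
    intro h0
    rw [dyadicMeasure, Finset.sum_eq_zero_iff] at h0
    have := h0 Q hQ
    rw [cs_cube_vol, ENNReal.ofReal_eq_zero] at this
    have h2 : (0:ℝ) < ((2:ℝ) ^ Q.k) ^ d := by positivity
    linarith
  rw [h, ENNReal.mul_top]
  apply mul_ne_zero
  · simpa using ha
  · rw [Ne, ENNReal.rpow_eq_zero_iff]
    rintro (⟨h1, -⟩ | ⟨-, h2⟩)
    · exact hμ h1
    · norm_num at h2

lemma cs_FA {d : ℕ} {𝔔 : Finset (DyadicCube d)} {F : DyadicCube d → Euc d → ℂ} {Q : DyadicCube d}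
    (hQ : Q ∈ 𝔔) : ∫⁻ y in Q.set, ‖F Q y‖ₑ ≤ supLp 1 𝔔 F := by
  refine (setLIntegral_le_lintegral _ _).trans ?_
  rw [← eLpNorm_one_eq_lintegral_enorm, supLp, ENNReal.ofReal_one]
  exact le_iSup₂ (f := fun Q (_ : Q ∈ 𝔔) => eLpNorm (F Q) 1 volume) Q hQ

lemma cs_card_vol {d : ℕ} (𝔔 : Finset (DyadicCube d)) (k : ℤ) :
    ENNReal.ofReal (((2:ℝ) ^ k) ^ d) * (𝔔.filter (fun Q' => Q'.k = k)).card =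
      ∑ Q ∈ 𝔔.filter (fun Q' => Q'.k = k), volume Q.set := by
  rw [Finset.sum_congr rfl (g := fun _ => ENNReal.ofReal (((2:ℝ) ^ k) ^ d))]
  · rw [Finset.sum_const, nsmul_eq_mul, mul_comm]
  · intro Q hQ
    rw [cs_cube_vol, (Finset.mem_filter.1 hQ).2]

/-- Christ–Sogge type `L²` estimates for sums of bump multipliers of the
distance to the boundary, applied to functions on dyadic cubes. -/
theorem christ_sogge_L2
    (d : ℕ) (hd : 2 ≤ d) (Ω : Set (Euc d)) (ρ : Euc d → ℝ)
    (hρ : IsMinkowskiGauge d Ω ρ) (hcurv : HasNonvanishingCurvature d ρ) :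
    ∃ (M : ℕ) (C : ℝ), 1 ≤ M ∧
      ∀ χ : ℕ → ℝ → ℂ, (∀ j, MemYM M (χ j)) →
      ∀ 𝔔 : Finset (DyadicCube d), (∀ Q ∈ 𝔔, 0 ≤ Q.k) →
      ∀ F : DyadicCube d → Euc d → ℂ,
        (∀ s : ℕ,
          eLpNorm
              (fun x => Finset.sum
                  ((𝔔.image (fun Q => Q.k)).filter (fun kk => (s : ℤ) ≤ kk))
                  fun (kk : ℤ) =>
                ((2:ℝ) ^ (((kk : ℝ) + (s : ℝ)) * ((d : ℝ) + 1) / 2)) •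
                  mulOp (fun ξ => χ (kk + (s : ℤ)).toNat ((2:ℝ) ^ (kk + (s : ℤ)) * (1 - ρ ξ)))
                    (fun y => ∑ Q ∈ 𝔔.filter (fun Q' => Q'.k = kk),
                      Q.set.indicator (F Q) y) x)
              2 volume ≤
            ENNReal.ofReal (C * (2:ℝ) ^ ((s : ℝ) * ((d : ℝ) + 1) / 2)) *
              dyadicMeasure 𝔔 ^ ((1 : ℝ) / 2) * supLp 1 𝔔 F) ∧
        (∀ j L : ℕ, 0 < L → 2 * L ≤ j →
          eLpNorm
              (fun x => ((2:ℝ) ^ ((j : ℝ) * ((d : ℝ) + 1) / 2)) •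
                mulOp (fun ξ => χ j ((2:ℝ) ^ (j : ℤ) * (1 - ρ ξ)))
                  (fun y => ∑ Q ∈ 𝔔.filter (fun Q' => Q'.k = (L : ℤ)),
                    Q.set.indicator (F Q) y) x)
              2 volume ≤
            ENNReal.ofReal
                (C * (2:ℝ) ^ ((j : ℝ) * (3 * (d : ℝ) + 1) / 4 - (L : ℝ) * (d : ℝ))) *
              dyadicMeasure 𝔔 ^ ((1 : ℝ) / 2) * supLp 1 𝔔 F) := by
  obtain ⟨C, hC, hmain⟩ := cs_main (by omega : 1 ≤ d) hρ
  have h2 : (0:ℝ) < 2 := by norm_num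
  have hB : 0 < Real.sqrt (4 * C) := Real.sqrt_pos.2 (by positivity)
  have hBsq : Real.sqrt (4 * C) ^ 2 = 4 * C := Real.sq_sqrt (by positivity)
  refine ⟨1, Real.sqrt (4 * C), le_rfl, ?_⟩
  intro χ hχ 𝔔 h𝔔 F
  by_cases hA : supLp 1 𝔔 F = ⊤
  · refine ⟨fun s => ?_, fun j L _ _ => ?_⟩
    · rw [cs_top hA (by positivity)]; exact le_top
    · rw [cs_top hA (by positivity)]; exact le_top
  set A := supLp 1 𝔔 F with hAd
  set S : ℤ → Finset (DyadicCube d) := fun k => 𝔔.filter (fun Q' => Q'.k = k) with hS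
  refine ⟨fun s => ?_, fun j L hL hLj => ?_⟩
  · apply cs_eLp _ _ (by positivity)
    set I := (𝔔.image (fun Q => Q.k)).filter (fun kk => (s : ℤ) ≤ kk) with hI
    refine (hmain s I ?_ (fun k => χ (k + (s : ℤ)).toNat) (fun k => hχ _)
      (fun k => (2:ℝ) ^ (((k : ℝ) + (s : ℝ)) * ((d : ℝ) + 1) / 2)) S ?_ F A hA ?_).trans ?_
    · intro k hk
      have := (Finset.mem_filter.1 hk).2
      omega
    · intro k _ Q hQ; exact (Finset.mem_filter.1 hQ).2
    · intro k _ Q hQ; exact cs_FA (Finset.mem_filter.1 hQ).1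
    · have hcoef : ∀ k : ℤ, 4 * C * ((2:ℝ) ^ (((k : ℝ) + (s : ℝ)) * ((d : ℝ) + 1) / 2)) ^ 2 * (2:ℝ) ^ (-k) =
          (Real.sqrt (4 * C) * (2:ℝ) ^ ((s : ℝ) * ((d : ℝ) + 1) / 2)) ^ 2 * ((2:ℝ) ^ k) ^ d := by
        intro k
        rw [mul_pow, hBsq, mul_assoc (4 * C), mul_assoc (4 * C)]
        congr 1
        rw [← Real.rpow_natCast, ← Real.rpow_natCast, ← Real.rpow_natCast, ← Real.rpow_intCast,
          ← Real.rpow_intCast, ← Real.rpow_mul h2.le, ← Real.rpow_mul h2.le, ← Real.rpow_mul h2.le,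
          ← Real.rpow_add h2, ← Real.rpow_add h2]
        congr 1
        push_cast
        ring
      have hle : ∑ k ∈ I, ∑ Q ∈ S k, volume Q.set ≤ dyadicMeasure 𝔔 := by
        rw [dyadicMeasure, ← Finset.sum_fiberwise_of_maps_to
          (fun Q hQ => Finset.mem_image_of_mem (fun Q : DyadicCube d => Q.k) hQ)]
        exact Finset.sum_le_sum_of_subset (Finset.filter_subset _ _)
      calc _ = ∑ k ∈ I, ENNReal.ofReal ((Real.sqrt (4 * C) * (2:ℝ) ^ ((s : ℝ) * ((d : ℝ) + 1) / 2)) ^ 2) *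
            A ^ 2 * ∑ Q ∈ S k, volume Q.set := by
            refine Finset.sum_congr rfl fun k _ => ?_
            rw [hcoef, ENNReal.ofReal_mul (by positivity), ← cs_card_vol]
            ring
        _ ≤ ENNReal.ofReal ((Real.sqrt (4 * C) * (2:ℝ) ^ ((s : ℝ) * ((d : ℝ) + 1) / 2)) ^ 2) *
            A ^ 2 * dyadicMeasure 𝔔 := by
            rw [← Finset.mul_sum]; exact mul_le_mul_right hle _
        _ = _ := by ring
  · apply cs_eLp _ _ (by positivity)
    have hm := hmain (j - L) {(L : ℤ)} (by simp) (fun _ => χ j) (fun _ => hχ j)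
      (fun _ => (2:ℝ) ^ ((j : ℝ) * ((d : ℝ) + 1) / 2)) S
      (fun k _ Q hQ => (Finset.mem_filter.1 hQ).2) F A hA
      (fun k _ Q hQ => cs_FA (Finset.mem_filter.1 hQ).1)
    have hj : (L : ℤ) + ((j - L : ℕ) : ℤ) = (j : ℤ) := by omega
    simp only [Finset.sum_singleton, hj] at hm
    refine hm.trans ?_
    have hcoef : 4 * C * ((2:ℝ) ^ ((j : ℝ) * ((d : ℝ) + 1) / 2)) ^ 2 * (2:ℝ) ^ (-(L : ℤ)) ≤
        (Real.sqrt (4 * C) * (2:ℝ) ^ ((j : ℝ) * (3 * (d : ℝ) + 1) / 4 - (L : ℝ) * (d : ℝ))) ^ 2 *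
          ((2:ℝ) ^ (L : ℤ)) ^ d := by
      rw [mul_pow, hBsq, mul_assoc (4 * C), mul_assoc (4 * C)]
      refine mul_le_mul_of_nonneg_left ?_ (by positivity)
      rw [← Real.rpow_natCast, ← Real.rpow_natCast, ← Real.rpow_natCast, ← Real.rpow_intCast,
        ← Real.rpow_intCast, ← Real.rpow_mul h2.le, ← Real.rpow_mul h2.le, ← Real.rpow_mul h2.le,
        ← Real.rpow_add h2, ← Real.rpow_add h2]
      apply Real.rpow_le_rpow_of_exponent_le (by norm_num)
      push_cast
      have h1 : (2:ℝ) * L ≤ j := by exact_mod_cast hLj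
      have h3 : (2:ℝ) ≤ d := by exact_mod_cast hd
      nlinarith [mul_nonneg (sub_nonneg.2 h1) (by linarith : (0:ℝ) ≤ d - 1)]
    have hle : ∑ Q ∈ S L, volume Q.set ≤ dyadicMeasure 𝔔 :=
      Finset.sum_le_sum_of_subset (Finset.filter_subset _ _)
    calc _ ≤ ENNReal.ofReal ((Real.sqrt (4 * C) * (2:ℝ) ^ ((j : ℝ) * (3 * (d : ℝ) + 1) / 4 - (L : ℝ) * (d : ℝ))) ^ 2 *
          ((2:ℝ) ^ (L : ℤ)) ^ d) * ((S L).card * A ^ 2) := by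
          gcongr
      _ = ENNReal.ofReal ((Real.sqrt (4 * C) * (2:ℝ) ^ ((j : ℝ) * (3 * (d : ℝ) + 1) / 4 - (L : ℝ) * (d : ℝ))) ^ 2) *
          A ^ 2 * ∑ Q ∈ S L, volume Q.set := by
          rw [ENNReal.ofReal_mul (by positivity), ← cs_card_vol]
          ring
      _ ≤ ENNReal.ofReal ((Real.sqrt (4 * C) * (2:ℝ) ^ ((j : ℝ) * (3 * (d : ℝ) + 1) / 4 - (L : ℝ) * (d : ℝ))) ^ 2) *
          A ^ 2 * dyadicMeasure 𝔔 := mul_le_mul_right hle _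
      _ = _ := by ring
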